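/- arXiv:2512.01172 — 7 statements merged into one kernel-verified Lean document; each statement's English description precedes it below -/
import Mathlib

section
/- Under the Lagrangian flow data assumptions, fix t ∈ [0,1] with ∫ ‖V(x,t)‖² dμ(x) < ∞. Then there exists a measurable vector field v_t : ℝ^d → ℝ^d with ∫ ‖v_t(y)‖² dρ_t(y) ≤ ∫ ‖V(x,t)‖² dμ(x) such that for every measurable ψ : ℝ^d → ℝ^d with ∫ ‖ψ‖² dρ_t < ∞ one has ∫_{ℝ^d} ⟨ψ(y), v_t(y)⟩ dρ_t(y) = ∫_{ℝ^d} ⟨ψ(X_t(x)), V(x,t)⟩ dμ(x); moreover, any two such vector fields agree ρ_t-almost everywhere. -/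
open MeasureTheory Set
open scoped RealInnerProductSpace

/-- Abstract version: adjoint of the composition isometry between `L²` spaces. -/
theorem flow_aux {E : Type*} [NormedAddCommGroup E] [InnerProductSpace ℝ E] [CompleteSpace E]
    [MeasurableSpace E] [BorelSpace E] [SecondCountableTopology E]
    (μ ρ : Measure E) (Y U : E → E) (hY : MeasurePreserving Y μ ρ) (hU : Measurable U)
    (hUt : Integrable (fun x => ‖U x‖ ^ 2) μ) :
    ∃ v : E → E,
      Measurable v ∧
      Integrable (fun y => ‖v y‖ ^ 2) ρ ∧
      (∫ y, ‖v y‖ ^ 2 ∂ρ ≤ ∫ x, ‖U x‖ ^ 2 ∂μ) ∧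
      (∀ ψ : E → E, Measurable ψ → Integrable (fun y => ‖ψ y‖ ^ 2) ρ →
        ∫ y, ⟪ψ y, v y⟫ ∂ρ = ∫ x, ⟪ψ (Y x), U x⟫ ∂μ) ∧
      (∀ w : E → E, Measurable w → Integrable (fun y => ‖w y‖ ^ 2) ρ →
        (∀ ψ : E → E, Measurable ψ → Integrable (fun y => ‖ψ y‖ ^ 2) ρ →
          ∫ y, ⟪ψ y, w y⟫ ∂ρ = ∫ x, ⟪ψ (Y x), U x⟫ ∂μ) →
        w =ᵐ[ρ] v) := by
  have key : ∀ (ν : Measure E) (f : E → E), Measurable f → Integrable (fun y => ‖f y‖ ^ 2) ν →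
      MemLp f 2 ν := fun ν f hf hi =>
    (memLp_two_iff_integrable_sq_norm hf.aestronglyMeasurable).2 hi
  have nsq : ∀ (ν : Measure E) (f : Lp E 2 ν), ∫ y, ‖f y‖ ^ 2 ∂ν = ‖f‖ ^ 2 := by
    intro ν f
    rw [← real_inner_self_eq_norm_sq, L2.inner_def]
    simp only [real_inner_self_eq_norm_sq]
  have ii : ∀ (a b : E → E), MemLp a 2 ρ → MemLp b 2 ρ →
      Integrable (fun y => ⟪a y, b y⟫) ρ := by
    intro a b ha hb
    refine (L2.integrable_inner (𝕜 := ℝ) (ha.toLp a) (hb.toLp b)).congr ?_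
    filter_upwards [ha.coeFn_toLp, hb.coeFn_toLp] with y h1 h2
    rw [h1, h2]
  have hUL := key μ U hU hUt
  let T : Lp E 2 ρ →L[ℝ] Lp E 2 μ :=
    (Lp.compMeasurePreservingₗᵢ ℝ Y hY).toContinuousLinearMap
  have hT : ‖T‖ ≤ 1 := LinearIsometry.norm_toContinuousLinearMap_le _
  let g : Lp E 2 ρ := ContinuousLinearMap.adjoint T (hUL.toLp U)
  have hgm : Measurable g := (Lp.stronglyMeasurable g).measurable
  have hgi : Integrable (fun y => ‖g y‖ ^ 2) ρ :=
    (memLp_two_iff_integrable_sq_norm hgm.aestronglyMeasurable).1 (Lp.memLp g)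
  have hmatch : ∀ ψ : E → E, Measurable ψ → Integrable (fun y => ‖ψ y‖ ^ 2) ρ →
        ∫ y, ⟪ψ y, g y⟫ ∂ρ = ∫ x, ⟪ψ (Y x), U x⟫ ∂μ := by
    intro ψ hψ hψi
    have hψL := key ρ ψ hψ hψi
    have h1 : ⟪hψL.toLp ψ, g⟫ = ⟪T (hψL.toLp ψ), hUL.toLp U⟫ :=
      ContinuousLinearMap.adjoint_inner_right T _ _
    rw [L2.inner_def, L2.inner_def] at h1
    have e1 : ∫ y, ⟪(hψL.toLp ψ) y, g y⟫ ∂ρ = ∫ y, ⟪ψ y, g y⟫ ∂ρ := by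
      apply integral_congr_ae
      filter_upwards [hψL.coeFn_toLp] with y hy
      rw [hy]
    have e2 : ∫ x, ⟪(T (hψL.toLp ψ)) x, (hUL.toLp U) x⟫ ∂μ = ∫ x, ⟪ψ (Y x), U x⟫ ∂μ := by
      apply integral_congr_ae
      have h3 : (T (hψL.toLp ψ)) =ᵐ[μ] (hψL.toLp ψ) ∘ Y :=
        Lp.coeFn_compMeasurePreserving _ hY
      filter_upwards [h3, hUL.coeFn_toLp,
        hY.quasiMeasurePreserving.ae hψL.coeFn_toLp] with x h3 h4 h5
      rw [h3, h4, Function.comp_apply, h5]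
    rw [← e1, ← e2, h1]
  refine ⟨g, hgm, hgi, ?_, hmatch, ?_⟩
  · have h1 : ‖g‖ ≤ ‖hUL.toLp U‖ := by
      calc ‖g‖ ≤ ‖ContinuousLinearMap.adjoint T‖ * ‖hUL.toLp U‖ :=
            ContinuousLinearMap.le_opNorm _ _
        _ ≤ 1 * ‖hUL.toLp U‖ := by
            gcongr
            rw [LinearIsometryEquiv.norm_map]
            exact hT
        _ = _ := one_mul _
    have h2 : ∫ x, ‖U x‖ ^ 2 ∂μ = ‖hUL.toLp U‖ ^ 2 := by
      rw [← nsq]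
      apply integral_congr_ae
      filter_upwards [hUL.coeFn_toLp] with x hx
      rw [hx]
    rw [h2, nsq]
    gcongr
  · intro w hw hwi hwm
    have hwL := key ρ w hw hwi
    have hdL : MemLp (fun y => w y - g y) 2 ρ := hwL.sub (Lp.memLp g)
    have hdm : Measurable (fun y => w y - g y) := hw.sub hgm
    have hdi := (memLp_two_iff_integrable_sq_norm hdm.aestronglyMeasurable).1 hdL
    have h0 := (hwm _ hdm hdi).trans (hmatch _ hdm hdi).symm
    have i1 : Integrable (fun y => ⟪w y - g y, w y⟫) ρ := ii _ _ hdL hwL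
    have i2 : Integrable (fun y => ⟪w y - g y, g y⟫) ρ := ii _ _ hdL (Lp.memLp g)
    have h1 : ∫ y, ‖w y - g y‖ ^ 2 ∂ρ = 0 := by
      rw [← sub_eq_zero, ← integral_sub i1 i2] at h0
      rw [← h0]
      congr 1
      ext y
      rw [← inner_sub_right, real_inner_self_eq_norm_sq]
    rw [integral_eq_zero_iff_of_nonneg (fun y => by positivity) hdi] at h1
    filter_upwards [h1] with y hy
    have : ‖w y - g y‖ = 0 := by simpa using hy
    exact sub_eq_zero.1 (norm_eq_zero.1 this)

/-- existence and `ρ_t`-a.e. uniqueness of the flow-matched vector field `v_t`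
with `∫‖v_t‖² dρ_t ≤ ∫‖V(·,t)‖² dμ` and the matching identity
`∫ ⟨ψ, v_t⟩ dρ_t = ∫ ⟨ψ(X_t), V(·,t)⟩ dμ` for all `ψ ∈ L²(ρ_t)`. -/
theorem flow_matched_field_exists_unique {d : ℕ}
    (μ : Measure (EuclideanSpace ℝ (Fin d))) [IsProbabilityMeasure μ]
    (hμ2 : Integrable (fun x => ‖x‖ ^ 2) μ)
    (X V : EuclideanSpace ℝ (Fin d) → ℝ → EuclideanSpace ℝ (Fin d))
    (hXm : Measurable (Function.uncurry X))
    (hVm : Measurable (Function.uncurry V))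
    (hflow : ∀ᵐ x ∂μ, X x 0 = x ∧
      ∀ t ∈ Icc (0 : ℝ) 1, X x t = x + ∫ s in (0 : ℝ)..t, V x s)
    (hE : Integrable (fun x => ∫ s in (0 : ℝ)..1, ‖V x s‖ ^ 2) μ)
    (t : ℝ) (ht : t ∈ Icc (0 : ℝ) 1)
    (hVt : Integrable (fun x => ‖V x t‖ ^ 2) μ) :
    ∃ v : EuclideanSpace ℝ (Fin d) → EuclideanSpace ℝ (Fin d),
      Measurable v ∧
      Integrable (fun y => ‖v y‖ ^ 2) (μ.map (fun x => X x t)) ∧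
      (∫ y, ‖v y‖ ^ 2 ∂(μ.map (fun x => X x t)) ≤ ∫ x, ‖V x t‖ ^ 2 ∂μ) ∧
      (∀ ψ : EuclideanSpace ℝ (Fin d) → EuclideanSpace ℝ (Fin d), Measurable ψ →
        Integrable (fun y => ‖ψ y‖ ^ 2) (μ.map (fun x => X x t)) →
        ∫ y, ⟪ψ y, v y⟫ ∂(μ.map (fun x => X x t)) = ∫ x, ⟪ψ (X x t), V x t⟫ ∂μ) ∧
      (∀ w : EuclideanSpace ℝ (Fin d) → EuclideanSpace ℝ (Fin d), Measurable w →
        Integrable (fun y => ‖w y‖ ^ 2) (μ.map (fun x => X x t)) →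
        (∀ ψ : EuclideanSpace ℝ (Fin d) → EuclideanSpace ℝ (Fin d), Measurable ψ →
          Integrable (fun y => ‖ψ y‖ ^ 2) (μ.map (fun x => X x t)) →
          ∫ y, ⟪ψ y, w y⟫ ∂(μ.map (fun x => X x t)) = ∫ x, ⟪ψ (X x t), V x t⟫ ∂μ) →
        w =ᵐ[μ.map (fun x => X x t)] v) := by
  have hX : Measurable (fun x => X x t) := hXm.comp (measurable_id.prodMk measurable_const)
  have hV : Measurable (fun x => V x t) := hVm.comp (measurable_id.prodMk measurable_const)
  exact flow_aux μ _ (fun x => X x t) (fun x => V x t) ⟨hX, rfl⟩ hV hVt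
end

section
/- Under the Lagrangian flow data assumptions, fix t ∈ [0,1] with ∫ ‖V(x,t)‖² dμ(x) < ∞ and let v_t be the flow-matched vector field, i.e. the (ρ_t-a.e. unique) field with ∫‖v_t‖² dρ_t < ∞ satisfying ∫ ⟨ψ(y), v_t(y)⟩ dρ_t(y) = ∫ ⟨ψ(X_t(x)), V(x,t)⟩ dμ(x) for all ψ ∈ L²(ρ_t). Then for every measurable ψ : ℝ^d → ℝ^d with ∫ ‖ψ‖² dρ_t < ∞, the Pythagorean identity holds: ∫ ‖V(x,t) − ψ(X_t(x))‖² dμ(x) = ∫ ‖V(x,t) − v_t(X_t(x))‖² dμ(x) + ∫ ‖v_t(y) − ψ(y)‖² dρ_t(y). In particular, v_t is the unique (up to ρ_t-null sets) minimizer of ψ ↦ ∫ ‖ψ(X_t(x)) − V(x,t)‖² dμ(x) over ψ ∈ L²(ρ_t). -/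
open MeasureTheory Set
open scoped RealInnerProductSpace

/-- the Pythagorean identity for the flow-matched vector field `v_t`:
for every `ψ ∈ L²(ρ_t)`,
`∫‖V − ψ∘X_t‖² dμ = ∫‖V − v_t∘X_t‖² dμ + ∫‖v_t − ψ‖² dρ_t`,
so `v_t` is the (ρ_t-a.e. unique) minimizer of `ψ ↦ ∫‖ψ∘X_t − V‖² dμ` over `L²(ρ_t)`. -/
theorem flow_matched_pythagoras {d : ℕ}
    (μ : Measure (EuclideanSpace ℝ (Fin d))) [IsProbabilityMeasure μ]
    (hμ2 : Integrable (fun x => ‖x‖ ^ 2) μ)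
    (X V : EuclideanSpace ℝ (Fin d) → ℝ → EuclideanSpace ℝ (Fin d))
    (hXm : Measurable (Function.uncurry X))
    (hVm : Measurable (Function.uncurry V))
    (hflow : ∀ᵐ x ∂μ, X x 0 = x ∧
      ∀ t ∈ Icc (0 : ℝ) 1, X x t = x + ∫ s in (0 : ℝ)..t, V x s)
    (hE : Integrable (fun x => ∫ s in (0 : ℝ)..1, ‖V x s‖ ^ 2) μ)
    (t : ℝ) (ht : t ∈ Icc (0 : ℝ) 1)
    (hVt : Integrable (fun x => ‖V x t‖ ^ 2) μ)
    (vt : EuclideanSpace ℝ (Fin d) → EuclideanSpace ℝ (Fin d))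
    (hvtm : Measurable vt)
    (hvt2 : Integrable (fun y => ‖vt y‖ ^ 2) (μ.map (fun x => X x t)))
    (hmatch : ∀ ψ : EuclideanSpace ℝ (Fin d) → EuclideanSpace ℝ (Fin d), Measurable ψ →
      Integrable (fun y => ‖ψ y‖ ^ 2) (μ.map (fun x => X x t)) →
      ∫ y, ⟪ψ y, vt y⟫ ∂(μ.map (fun x => X x t)) = ∫ x, ⟪ψ (X x t), V x t⟫ ∂μ) :
    ∀ ψ : EuclideanSpace ℝ (Fin d) → EuclideanSpace ℝ (Fin d), Measurable ψ →
      Integrable (fun y => ‖ψ y‖ ^ 2) (μ.map (fun x => X x t)) →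
      (∫ x, ‖V x t - ψ (X x t)‖ ^ 2 ∂μ =
        (∫ x, ‖V x t - vt (X x t)‖ ^ 2 ∂μ) +
          ∫ y, ‖vt y - ψ y‖ ^ 2 ∂(μ.map (fun x => X x t))) ∧
      (∫ x, ‖vt (X x t) - V x t‖ ^ 2 ∂μ ≤ ∫ x, ‖ψ (X x t) - V x t‖ ^ 2 ∂μ) ∧
      ((∫ x, ‖ψ (X x t) - V x t‖ ^ 2 ∂μ = ∫ x, ‖vt (X x t) - V x t‖ ^ 2 ∂μ) →
        ψ =ᵐ[μ.map (fun x => X x t)] vt) := by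
  intro ψ hψm hψ2
  have hX : Measurable (fun x => X x t) := hXm.comp (measurable_id.prodMk measurable_const)
  have hV : Measurable (fun x => V x t) := hVm.comp (measurable_id.prodMk measurable_const)
  have LV : MemLp (fun x => V x t) 2 μ :=
    (memLp_two_iff_integrable_sq_norm hV.aestronglyMeasurable).2 hVt
  have Lv : MemLp vt 2 (μ.map (fun x => X x t)) :=
    (memLp_two_iff_integrable_sq_norm hvtm.aestronglyMeasurable).2 hvt2
  have Lψ : MemLp ψ 2 (μ.map (fun x => X x t)) :=
    (memLp_two_iff_integrable_sq_norm hψm.aestronglyMeasurable).2 hψ2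
  have Lb : MemLp (fun y => vt y - ψ y) 2 (μ.map (fun x => X x t)) := Lv.sub Lψ
  have hbm : Measurable (fun y => vt y - ψ y) := hvtm.sub hψm
  have Ib : Integrable (fun y => ‖vt y - ψ y‖ ^ 2) (μ.map (fun x => X x t)) :=
    (memLp_two_iff_integrable_sq_norm hbm.aestronglyMeasurable).1 Lb
  have LvX : MemLp (fun x => vt (X x t)) 2 μ := Lv.comp_of_map hX.aemeasurable
  have LbX : MemLp (fun x => vt (X x t) - ψ (X x t)) 2 μ := Lb.comp_of_map hX.aemeasurable
  have La : MemLp (fun x => V x t - vt (X x t)) 2 μ := LV.sub LvX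
  have Ia : Integrable (fun x => ‖V x t - vt (X x t)‖ ^ 2) μ :=
    (memLp_two_iff_integrable_sq_norm La.1).1 La
  have IbX : Integrable (fun x => ‖vt (X x t) - ψ (X x t)‖ ^ 2) μ :=
    (memLp_two_iff_integrable_sq_norm LbX.1).1 LbX
  have HI : ∀ f g : EuclideanSpace ℝ (Fin d) → EuclideanSpace ℝ (Fin d),
      MemLp f 2 μ → MemLp g 2 μ → Integrable (fun x => ⟪f x, g x⟫) μ := by
    intro f g hf hg
    refine Integrable.mono' (((memLp_two_iff_integrable_sq_norm hf.1).1 hf).add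
      ((memLp_two_iff_integrable_sq_norm hg.1).1 hg)) (hf.1.inner hg.1) ?_
    refine Filter.Eventually.of_forall fun x => (norm_inner_le_norm (𝕜 := ℝ) _ _).trans ?_
    change ‖f x‖ * ‖g x‖ ≤ ‖f x‖ ^ 2 + ‖g x‖ ^ 2
    nlinarith [sq_nonneg (‖f x‖ - ‖g x‖), sq_nonneg (‖f x‖), sq_nonneg (‖g x‖)]
  have I1 : Integrable (fun x => ⟪vt (X x t) - ψ (X x t), V x t⟫) μ := HI _ _ LbX LV
  have I2 : Integrable (fun x => ⟪vt (X x t) - ψ (X x t), vt (X x t)⟫) μ :=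
    HI _ _ LbX LvX
  have key := hmatch _ hbm Ib
  rw [integral_map hX.aemeasurable (hbm.inner hvtm).aestronglyMeasurable] at key
  have pyth : ∫ x, ‖V x t - ψ (X x t)‖ ^ 2 ∂μ =
        (∫ x, ‖V x t - vt (X x t)‖ ^ 2 ∂μ) +
          ∫ y, ‖vt y - ψ y‖ ^ 2 ∂(μ.map (fun x => X x t)) := by
    rw [integral_map hX.aemeasurable Ib.1]
    have e : ∀ x, ‖V x t - ψ (X x t)‖ ^ 2 =
        (‖V x t - vt (X x t)‖ ^ 2 + ‖vt (X x t) - ψ (X x t)‖ ^ 2) +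
        2 * (⟪vt (X x t) - ψ (X x t), V x t⟫ - ⟪vt (X x t) - ψ (X x t), vt (X x t)⟫) := by
      intro x
      rw [← inner_sub_right, real_inner_comm,
        ← sub_add_sub_cancel (V x t) (vt (X x t)) (ψ (X x t)), norm_add_sq_real]
      ring
    simp_rw [e]
    have J1 : Integrable (fun x => ‖V x t - vt (X x t)‖ ^ 2 + ‖vt (X x t) - ψ (X x t)‖ ^ 2) μ :=
      Ia.add IbX
    have J2 : Integrable (fun x => 2 * (⟪vt (X x t) - ψ (X x t), V x t⟫ -
        ⟪vt (X x t) - ψ (X x t), vt (X x t)⟫)) μ := (I1.sub I2).const_mul 2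
    rw [integral_add J1 J2, integral_add Ia IbX,
      integral_const_mul, integral_sub I1 I2, key]
    ring
  refine ⟨pyth, ?_, ?_⟩
  · simp_rw [norm_sub_rev _ (V _ t)]
    rw [pyth]
    exact le_add_of_nonneg_right (integral_nonneg fun y => by positivity)
  · intro h
    simp_rw [norm_sub_rev _ (V _ t)] at h
    have h0 : ∫ y, ‖vt y - ψ y‖ ^ 2 ∂(μ.map (fun x => X x t)) = 0 := by linarith
    rw [integral_eq_zero_iff_of_nonneg (fun y => by positivity) Ib] at h0
    filter_upwards [h0] with y hy
    have h1 : ‖vt y - ψ y‖ ^ 2 = 0 := hy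
    have h2 : vt y - ψ y = 0 := by simpa using h1
    exact (sub_eq_zero.1 h2).symm
end

section
/- Under the Lagrangian flow data assumptions, let v : ℝ^d × [0,1] → ℝ^d be jointly measurable with v(·,t) the flow-matched vector field for a.e. t (as in the continuity-equation setting). Let f : ℝ^d × [0,1] → ℝ and G : ℝ^d → ℝ be measurable functions such that all integrals below are finite. Then the Eulerian cost is bounded by the Lagrangian cost: ∫_0^1 ( (1/2) ∫ ‖v(y,t)‖² dρ_t(y) + ∫ f(y,t) dρ_t(y) ) dt + ∫ G(y) dρ_1(y) ≤ ∫_0^1 ∫ ( (1/2) ‖V(x,t)‖² + f(X(x,t),t) ) dμ(x) dt + ∫ G(X(x,1)) dμ(x); moreover the interaction and terminal terms coincide exactly (∫ f(·,t) dρ_t = ∫ f(X_t(·),t) dμ for a.e. t and ∫ G dρ_1 = ∫ G(X_1(·)) dμ), so the inequality holds in the kinetic term: ∫_0^1 ∫ ‖v(y,t)‖² dρ_t(y) dt ≤ ∫_0^1 ∫ ‖V(x,t)‖² dμ(x) dt. -/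
open MeasureTheory Set
open scoped RealInnerProductSpace

/-- with `v(·,t)` the flow-matched vector field for a.e. `t`, the Eulerian
cost is bounded by the Lagrangian cost; the interaction and terminal terms coincide
exactly, and the inequality holds in the kinetic term. -/
theorem eulerian_cost_le_lagrangian_cost {d : ℕ}
    (μ : Measure (EuclideanSpace ℝ (Fin d))) [IsProbabilityMeasure μ]
    (hμ2 : Integrable (fun x => ‖x‖ ^ 2) μ)
    (X V : EuclideanSpace ℝ (Fin d) → ℝ → EuclideanSpace ℝ (Fin d))
    (hXm : Measurable (Function.uncurry X))
    (hVm : Measurable (Function.uncurry V))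
    (hflow : ∀ᵐ x ∂μ, X x 0 = x ∧
      ∀ t ∈ Icc (0 : ℝ) 1, X x t = x + ∫ s in (0 : ℝ)..t, V x s)
    (hE : Integrable (fun x => ∫ s in (0 : ℝ)..1, ‖V x s‖ ^ 2) μ)
    (v : EuclideanSpace ℝ (Fin d) → ℝ → EuclideanSpace ℝ (Fin d))
    (hvm : Measurable (Function.uncurry v))
    (hmatch : ∀ᵐ t ∂(volume.restrict (Icc (0 : ℝ) 1)),
      Integrable (fun y => ‖v y t‖ ^ 2) (μ.map (fun x => X x t)) ∧
      ∀ ψ : EuclideanSpace ℝ (Fin d) → EuclideanSpace ℝ (Fin d), Measurable ψ →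
        Integrable (fun y => ‖ψ y‖ ^ 2) (μ.map (fun x => X x t)) →
        ∫ y, ⟪ψ y, v y t⟫ ∂(μ.map (fun x => X x t)) = ∫ x, ⟪ψ (X x t), V x t⟫ ∂μ)
    (f : EuclideanSpace ℝ (Fin d) → ℝ → ℝ) (G : EuclideanSpace ℝ (Fin d) → ℝ)
    (hfm : Measurable (Function.uncurry f)) (hGm : Measurable G)
    -- all integrals below are finite:
    (hVt2 : ∀ᵐ t ∂(volume.restrict (Icc (0 : ℝ) 1)),
      Integrable (fun x => ‖V x t‖ ^ 2) μ)
    (hfX : ∀ᵐ t ∂(volume.restrict (Icc (0 : ℝ) 1)),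
      Integrable (fun x => f (X x t) t) μ)
    (hfout : IntegrableOn (fun t => ∫ x, f (X x t) t ∂μ) (Icc (0 : ℝ) 1))
    (hVout : IntegrableOn (fun t => ∫ x, ‖V x t‖ ^ 2 ∂μ) (Icc (0 : ℝ) 1))
    (hvout : IntegrableOn
      (fun t => ∫ y, ‖v y t‖ ^ 2 ∂(μ.map (fun x => X x t))) (Icc (0 : ℝ) 1))
    (hG : Integrable (fun x => G (X x 1)) μ) :
    ((∫ t in Icc (0 : ℝ) 1,
        ((1 : ℝ) / 2 * ∫ y, ‖v y t‖ ^ 2 ∂(μ.map (fun x => X x t))) +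
          ∫ y, f y t ∂(μ.map (fun x => X x t))) +
        ∫ y, G y ∂(μ.map (fun x => X x 1)) ≤
      (∫ t in Icc (0 : ℝ) 1,
        ∫ x, ((1 : ℝ) / 2 * ‖V x t‖ ^ 2 + f (X x t) t) ∂μ) +
        ∫ x, G (X x 1) ∂μ) ∧
    (∀ᵐ t ∂(volume.restrict (Icc (0 : ℝ) 1)),
      ∫ y, f y t ∂(μ.map (fun x => X x t)) = ∫ x, f (X x t) t ∂μ) ∧
    (∫ y, G y ∂(μ.map (fun x => X x 1)) = ∫ x, G (X x 1) ∂μ) ∧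
    (∫ t in Icc (0 : ℝ) 1, ∫ y, ‖v y t‖ ^ 2 ∂(μ.map (fun x => X x t)) ≤
      ∫ t in Icc (0 : ℝ) 1, ∫ x, ‖V x t‖ ^ 2 ∂μ) := by
  have hXt : ∀ t, Measurable (fun x => X x t) := fun t =>
    hXm.comp (measurable_id.prodMk measurable_const)
  have hVt : ∀ t, Measurable (fun x => V x t) := fun t =>
    hVm.comp (measurable_id.prodMk measurable_const)
  have hvt : ∀ t, Measurable (fun x => v x t) := fun t =>
    hvm.comp (measurable_id.prodMk measurable_const)
  have hft : ∀ t, Measurable (fun x => f x t) := fun t =>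
    hfm.comp (measurable_id.prodMk measurable_const)
  have hf : ∀ t, ∫ y, f y t ∂(μ.map (fun x => X x t)) = ∫ x, f (X x t) t ∂μ := fun t =>
    integral_map (hXt t).aemeasurable (hft t).aestronglyMeasurable
  have hG' : ∫ y, G y ∂(μ.map (fun x => X x 1)) = ∫ x, G (X x 1) ∂μ :=
    integral_map (hXt 1).aemeasurable hGm.aestronglyMeasurable
  have hkin : ∀ᵐ t ∂(volume.restrict (Icc (0 : ℝ) 1)),
      ∫ y, ‖v y t‖ ^ 2 ∂(μ.map (fun x => X x t)) ≤ ∫ x, ‖V x t‖ ^ 2 ∂μ := by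
    filter_upwards [hmatch, hVt2] with t ht hV2
    obtain ⟨hv2, hm⟩ := ht
    have h1 := hm (fun y => v y t) (hvt t) hv2
    simp only [real_inner_self_eq_norm_sq] at h1
    have hmeas : Measurable (fun y => ‖v y t‖ ^ 2) := (hvt t).norm.pow_const 2
    have h2 : ∫ y, ‖v y t‖ ^ 2 ∂(μ.map (fun x => X x t)) = ∫ x, ‖v (X x t) t‖ ^ 2 ∂μ :=
      integral_map (hXt t).aemeasurable hmeas.aestronglyMeasurable
    have hvX : Integrable (fun x => ‖v (X x t) t‖ ^ 2) μ := hv2.comp_measurable (hXt t)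
    have hint : Integrable (fun x => (1 / 2 : ℝ) * ‖v (X x t) t‖ ^ 2 + 1 / 2 * ‖V x t‖ ^ 2) μ :=
      (hvX.const_mul _).add (hV2.const_mul _)
    have hb : ∀ x, |⟪v (X x t) t, V x t⟫| ≤
        (1 / 2 : ℝ) * ‖v (X x t) t‖ ^ 2 + 1 / 2 * ‖V x t‖ ^ 2 := fun x => by
      have := abs_real_inner_le_norm (v (X x t) t) (V x t)
      nlinarith [sq_nonneg (‖v (X x t) t‖ - ‖V x t‖)]
    have hin : Integrable (fun x => ⟪v (X x t) t, V x t⟫) μ :=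
      hint.mono' (((hvt t).comp (hXt t)).inner (hVt t)).aestronglyMeasurable
        (Filter.Eventually.of_forall hb)
    have h3 := integral_mono hin hint (fun x => (le_abs_self _).trans (hb x))
    rw [integral_add (hvX.const_mul _) (hV2.const_mul _), integral_const_mul,
      integral_const_mul, ← h2, ← h1] at h3
    linarith
  refine ⟨?_, Filter.Eventually.of_forall hf, hG', integral_mono_ae hvout hVout hkin⟩
  rw [hG']
  gcongr ?_ + _
  have hR : (fun t => ∫ x, ((1 : ℝ) / 2 * ‖V x t‖ ^ 2 + f (X x t) t) ∂μ)
      =ᵐ[volume.restrict (Icc (0 : ℝ) 1)]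
      fun t => (1 : ℝ) / 2 * (∫ x, ‖V x t‖ ^ 2 ∂μ) + ∫ x, f (X x t) t ∂μ := by
    filter_upwards [hVt2, hfX] with t h1 h2
    rw [integral_add (h1.const_mul _) h2, integral_const_mul]
  rw [integral_congr_ae hR]
  simp only [hf]
  refine integral_mono_ae ((hvout.const_mul _).add hfout) ((hVout.const_mul _).add hfout) ?_
  filter_upwards [hkin] with t ht
  linarith
end

section
/- Let v : ℝ^d × [0,1] → ℝ^d be continuous, bounded, and Lipschitz in the space variable on compact sets uniformly in t, and let Φ : ℝ^d × [0,1] → ℝ^d be its flow map, i.e. Φ(x,0) = x and ∂_t Φ(x,t) = v(Φ(x,t), t) for all x and t. Let μ be a Borel probability measure on ℝ^d with finite second moment, and let (ρ_t)_{t∈[0,1]} be Borel probability measures on ℝ^d with ρ_0 = μ, such that t ↦ ∫ φ dρ_t is continuous for every bounded continuous φ, and such that the continuity equation holds weakly: for every smooth compactly supported φ : ℝ^d → ℝ and every t ∈ [0,1], ∫ φ dρ_t − ∫ φ dμ = ∫_0^t ∫ ⟨∇φ(y), v(y,r)⟩ dρ_r(y) dr. Then ρ_t = (Φ(·,t))_#μ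 for every t ∈ [0,1], and consequently ∫ ‖v(y,t)‖² dρ_t(y) = ∫ ‖v(Φ(x,t),t)‖² dμ(x) for every t. -/
open MeasureTheory Set
open scoped RealInnerProductSpace

set_option linter.unusedSectionVars false

section helpers
open Filter Topology Metric

variable {E : Type*} [NormedAddCommGroup E] [InnerProductSpace ℝ E] [FiniteDimensional ℝ E]
  [MeasurableSpace E] [BorelSpace E]

lemma ce_mollifier (E : Type*) [NormedAddCommGroup E] [InnerProductSpace ℝ E]
    [FiniteDimensional ℝ E] [MeasurableSpace E] [BorelSpace E] (ε : ℝ) (hε : 0 < ε) :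
    ∃ m : (E → ℝ) → E → ℝ,
      (∀ f, Continuous f → ContDiff ℝ ((⊤ : ℕ∞) : WithTop ℕ∞) (m f)) ∧
      (∀ f g : E → ℝ, Continuous f → Continuous g → ∀ x x' c,
        (∀ z, ‖z‖ ≤ ε → |f (x - z) - g (x' - z)| ≤ c) → |m f x - m g x'| ≤ c) ∧
      (∀ a x, m (fun _ => a) x = a) := by
  let φ : ContDiffBump (0 : E) := ⟨ε / 2, ε, half_pos hε, half_lt_self hε⟩
  let p : E → ℝ := φ.normed volume
  have hpint : ∀ u : E → ℝ, Continuous u → Integrable (fun z => p z * u z) := by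
    intro u hu
    exact ((φ.continuous_normed (μ := volume)).mul hu).integrable_of_hasCompactSupport
      ((φ.hasCompactSupport_normed (μ := volume)).mul_right)
  refine ⟨fun f x => ∫ z, p z * f (x - z), ?_, ?_, ?_⟩
  · intro f hf
    have hcs : HasCompactSupport (φ.normed (volume : Measure E)) := φ.hasCompactSupport_normed
    have := hcs.contDiff_convolution_left (ContinuousLinearMap.mul ℝ ℝ)
      (μ := volume) (n := ⊤) φ.contDiff_normed (hf.locallyIntegrable (μ := volume))
    exact this
  · intro f g hf hg x x' c h
    have h1 := hpint (fun z => f (x - z)) (by fun_prop)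
    have h2 := hpint (fun z => g (x' - z)) (by fun_prop)
    have e : (∫ z, p z * f (x - z)) - (∫ z, p z * g (x' - z))
        = ∫ z, p z * (f (x - z) - g (x' - z)) := by
      rw [← integral_sub h1 h2]; simp only [mul_sub]
    show |(∫ z, p z * f (x - z)) - (∫ z, p z * g (x' - z))| ≤ c
    rw [e, ← Real.norm_eq_abs]
    calc ‖∫ z, p z * (f (x - z) - g (x' - z))‖ ≤ ∫ z, p z * c := by
          apply norm_integral_le_of_norm_le ((φ.integrable_normed).mul_const c)
          refine Eventually.of_forall fun z => ?_
          rw [norm_mul, Real.norm_of_nonneg (φ.nonneg_normed z)]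
          by_cases hz : ‖z‖ ≤ ε
          · exact mul_le_mul_of_nonneg_left (h z hz) (φ.nonneg_normed z)
          · have : p z = 0 := by
              by_contra hne
              have : z ∈ Function.support (φ.normed volume) := hne
              rw [φ.support_normed_eq] at this
              rw [mem_ball_zero_iff] at this
              exact hz this.le
            show p z * _ ≤ p z * c
            simp [this]
      _ = c := by rw [integral_mul_const, φ.integral_normed, one_mul]
  · intro a x
    show ∫ z, p z * a = a
    rw [integral_mul_const, φ.integral_normed, one_mul]

/-- solutions of the ODE on `[0,1]` -/
def CESol (v : E → ℝ → E) (α : ℝ → E) : Prop :=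
  ∀ t ∈ Icc (0 : ℝ) 1, HasDerivWithinAt α (v (α t) t) (Icc (0 : ℝ) 1) t

lemma CESol.norm_sub_le {v : E → ℝ → E} {α : ℝ → E} (h : CESol v α) {M : ℝ}
    (hM : ∀ x t, ‖v x t‖ ≤ M) {s t : ℝ} (hs : s ∈ Icc (0 : ℝ) 1) (ht : t ∈ Icc (0 : ℝ) 1) :
    ‖α t - α s‖ ≤ M * |t - s| :=
  (convex_Icc 0 1).norm_image_sub_le_of_norm_hasDerivWithin_le h (fun _ _ => hM _ _) hs ht

lemma CESol.norm_le {v : E → ℝ → E} {α : ℝ → E} (h : CESol v α) {M : ℝ}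
    (hM : ∀ x t, ‖v x t‖ ≤ M) {s t : ℝ} (hs : s ∈ Icc (0 : ℝ) 1) (ht : t ∈ Icc (0 : ℝ) 1) :
    ‖α t‖ ≤ ‖α s‖ + M := by
  have h1 := h.norm_sub_le hM hs ht
  have hM0 : 0 ≤ M := (norm_nonneg _).trans (hM 0 0)
  have h2 : |t - s| ≤ 1 := by rw [abs_le]; constructor <;> linarith [hs.1, hs.2, ht.1, ht.2]
  have h3 := norm_sub_norm_le (α t) (α s)
  nlinarith

lemma ce_exists_sol {v : E → ℝ → E} (hcont : Continuous (Function.uncurry v)) {M : ℝ}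
    (hM : ∀ x t, ‖v x t‖ ≤ M)
    (hlip : ∀ K : Set E, IsCompact K →
      ∃ L : ℝ, ∀ t ∈ Icc (0 : ℝ) 1, ∀ x ∈ K, ∀ y ∈ K, ‖v x t - v y t‖ ≤ L * ‖x - y‖)
    {s : ℝ} (hs : s ∈ Icc (0 : ℝ) 1) (x : E) : ∃ α, α s = x ∧ CESol v α := by
  have hM0 : 0 ≤ M := (norm_nonneg _).trans (hM 0 0)
  obtain ⟨L, hL⟩ := hlip (closedBall x M) (isCompact_closedBall _ _)
  have : IsPicardLindelof (fun t x => v x t) (tmin := 0) (tmax := 1) ⟨s, hs⟩ x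
      ⟨M, hM0⟩ 0 ⟨M, hM0⟩ L.toNNReal := by
    constructor
    · intro t ht
      apply LipschitzOnWith.of_dist_le_mul
      intro a ha b hb
      rw [dist_eq_norm, dist_eq_norm]
      refine (hL t ht a ha b hb).trans ?_
      gcongr
      exact Real.le_coe_toNNReal L
    · intro y _
      have : Continuous (fun t => Function.uncurry v (y, t)) := by fun_prop
      exact this.continuousOn
    · intro t _ y _; exact hM _ _
    · show M * max (1 - s) (s - 0) ≤ M - 0
      have : max (1 - s) (s - 0) ≤ 1 := max_le (by linarith [hs.1]) (by linarith [hs.2])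
      nlinarith
  exact this.exists_eq_forall_mem_Icc_hasDerivWithinAt₀

/-- forward stability -/
lemma CESol.stability {v : E → ℝ → E} {α β : ℝ → E} (hα : CESol v α) (hβ : CESol v β) {M : ℝ}
    (hM : ∀ x t, ‖v x t‖ ≤ M) {R L : ℝ} (hL0 : 0 ≤ L)
    (hL : ∀ t ∈ Icc (0 : ℝ) 1, ∀ x ∈ closedBall (0 : E) (R + M), ∀ y ∈ closedBall (0 : E) (R + M),
      ‖v x t - v y t‖ ≤ L * ‖x - y‖)
    {s t : ℝ} (hs : s ∈ Icc (0 : ℝ) 1) (ht : t ∈ Icc (0 : ℝ) 1) (hst : s ≤ t)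
    (h1 : ‖α s‖ ≤ R) (h2 : ‖β s‖ ≤ R) : ‖α t - β t‖ ≤ Real.exp L * ‖α s - β s‖ := by
  have hsub : ∀ r ∈ Icc s t, r ∈ Icc (0 : ℝ) 1 := fun r hr => ⟨hs.1.trans hr.1, hr.2.trans ht.2⟩
  have hd : ∀ γ, CESol v γ → ∀ r ∈ Ico s t, HasDerivWithinAt γ (v (γ r) r) (Ici r) r := by
    intro γ hγ r hr
    refine (hγ r (hsub r (Ico_subset_Icc_self hr))).mono_of_mem_nhdsWithin ?_
    have : Icc r 1 ∈ 𝓝[≥] r := Icc_mem_nhdsGE (hr.2.trans_le ht.2)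
    exact mem_of_superset this (Icc_subset_Icc_left (hs.1.trans hr.1))
  have hc : ∀ γ, CESol v γ → ContinuousOn γ (Icc s t) := fun γ hγ r hr =>
    (hγ r (hsub r hr)).continuousWithinAt.mono hsub
  have := dist_le_of_trajectories_ODE_of_mem (v := fun t x => v x t) (K := ⟨L, hL0⟩)
    (s := fun _ => closedBall (0 : E) (R + M)) (a := s) (b := t) (f := α) (g := β)
    (δ := ‖α s - β s‖) ?_ (hc α hα) (hd α hα) ?_ (hc β hβ) (hd β hβ) ?_ (dist_eq_norm _ _).le t
    ⟨hst, le_rfl⟩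
  · rw [dist_eq_norm, mul_comm] at this
    refine this.trans ?_
    gcongr
    show L * (t - s) ≤ L
    nlinarith [hs.1, ht.2]
  · intro r hr
    apply LipschitzOnWith.of_dist_le_mul
    intro a ha b hb
    rw [dist_eq_norm, dist_eq_norm]
    exact hL r (hsub r (Ico_subset_Icc_self hr)) a ha b hb
  · intro r hr
    rw [mem_closedBall_zero_iff]
    exact (hα.norm_le hM hs (hsub r (Ico_subset_Icc_self hr))).trans (by linarith)
  · intro r hr
    rw [mem_closedBall_zero_iff]
    exact (hβ.norm_le hM hs (hsub r (Ico_subset_Icc_self hr))).trans (by linarith)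

lemma ce_lip_ball {v : E → ℝ → E}
    (hlip : ∀ K : Set E, IsCompact K →
      ∃ L : ℝ, ∀ t ∈ Icc (0 : ℝ) 1, ∀ x ∈ K, ∀ y ∈ K, ‖v x t - v y t‖ ≤ L * ‖x - y‖) (R : ℝ) :
    ∃ L : ℝ, 0 ≤ L ∧ ∀ t ∈ Icc (0 : ℝ) 1, ∀ x ∈ closedBall (0 : E) R,
      ∀ y ∈ closedBall (0 : E) R, ‖v x t - v y t‖ ≤ L * ‖x - y‖ := by
  obtain ⟨L, hL⟩ := hlip (closedBall 0 R) (isCompact_closedBall _ _)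
  refine ⟨max L 0, le_max_right _ _, fun t ht x hx y hy => (hL t ht x hx y hy).trans ?_⟩
  gcongr
  exact le_max_left _ _

lemma ce_unique {v : E → ℝ → E} {M : ℝ} (hM : ∀ x t, ‖v x t‖ ≤ M)
    (hlip : ∀ K : Set E, IsCompact K →
      ∃ L : ℝ, ∀ t ∈ Icc (0 : ℝ) 1, ∀ x ∈ K, ∀ y ∈ K, ‖v x t - v y t‖ ≤ L * ‖x - y‖)
    {α β : ℝ → E} (hα : CESol v α) (hβ : CESol v β)
    {s t : ℝ} (hs : s ∈ Icc (0 : ℝ) 1) (ht : t ∈ Icc (0 : ℝ) 1) (hst : s ≤ t)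
    (h : α s = β s) : α t = β t := by
  obtain ⟨L, hL0, hL⟩ := ce_lip_ball hlip (‖α s‖ + M)
  have := hα.stability hβ hM hL0 hL hs ht hst le_rfl (by rw [h])
  rw [h, sub_self, norm_zero, mul_zero] at this
  exact sub_eq_zero.1 (norm_le_zero_iff.1 this)

/-- the dual (backward transported) function -/
lemma ce_dual {v : E → ℝ → E} (hcont : Continuous (Function.uncurry v)) {M : ℝ}
    (hM : ∀ x t, ‖v x t‖ ≤ M)
    (hlip : ∀ K : Set E, IsCompact K →
      ∃ L : ℝ, ∀ t ∈ Icc (0 : ℝ) 1, ∀ x ∈ K, ∀ y ∈ K, ‖v x t - v y t‖ ≤ L * ‖x - y‖)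
    (Φ : E → ℝ → E) (hΦ0 : ∀ x, Φ x 0 = x) (hΦ : ∀ x, CESol v (Φ x))
    {T : ℝ} (hT : T ∈ Icc (0 : ℝ) 1) (ψ : E → ℝ) (hψc : HasCompactSupport ψ) {C₀ : NNReal}
    (hψ : LipschitzWith C₀ ψ) :
    ∃ (f : E → ℝ → ℝ) (R C : ℝ), 0 ≤ R ∧ 0 ≤ C ∧
      (∀ x, f x T = ψ x) ∧ (∀ x, f x 0 = ψ (Φ x T)) ∧
      (∀ s ∈ Icc (0 : ℝ) T, ∀ x, R < ‖x‖ → f x s = 0) ∧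
      (∀ s ∈ Icc (0 : ℝ) T, ∀ x y, |f x s - f y s| ≤ C * ‖x - y‖) ∧
      (∀ s ∈ Icc (0 : ℝ) T, ∀ y, ∃ α, CESol v α ∧ α s = y ∧
        ∀ t ∈ Icc (0 : ℝ) s, f y s = f (α t) t) := by
  have hM0 : 0 ≤ M := (norm_nonneg _).trans (hM 0 0)
  have hX : ∀ (x : E) (s : ℝ), ∃ α, s ∈ Icc (0 : ℝ) 1 → α s = x ∧ CESol v α := by
    intro x s
    by_cases hs : s ∈ Icc (0 : ℝ) 1
    · obtain ⟨α, h⟩ := ce_exists_sol hcont hM hlip hs x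
      exact ⟨α, fun _ => h⟩
    · exact ⟨fun _ => 0, fun h => absurd h hs⟩
  choose X hX using hX
  obtain ⟨R₀, hR₀⟩ := hψc.isCompact.isBounded.subset_closedBall (0 : E)
  have hψ0 : ∀ x, max R₀ 0 < ‖x‖ → ψ x = 0 := by
    intro x hx
    by_contra hne
    have := hR₀ (subset_tsupport _ hne)
    rw [mem_closedBall_zero_iff] at this
    exact absurd (this.trans (le_max_left _ _)) (not_le.2 hx)
  obtain ⟨B, hB⟩ := hψc.exists_bound_of_continuous hψ.continuous
  have hB0 : 0 ≤ B := (norm_nonneg _).trans (hB 0)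
  set R := max R₀ 0 + M with hR
  obtain ⟨L, hL0, hL⟩ := ce_lip_ball hlip (R + 1 + M)
  have h01 : ∀ s ∈ Icc (0 : ℝ) T, s ∈ Icc (0 : ℝ) 1 := fun s hs => ⟨hs.1, hs.2.trans hT.2⟩
  have hzero : ∀ s ∈ Icc (0 : ℝ) T, ∀ x, R < ‖x‖ → ψ (X x s T) = 0 := by
    intro s hs x hx
    apply hψ0
    obtain ⟨h1, h2⟩ := hX x s (h01 s hs)
    have := h2.norm_le hM hT (h01 s hs)
    rw [h1] at this
    linarith
  have hCl : ∀ s ∈ Icc (0 : ℝ) T, ∀ x y, ‖x‖ ≤ R + 1 → ‖y‖ ≤ R + 1 →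
      |ψ (X x s T) - ψ (X y s T)| ≤ (C₀ * Real.exp L + B) * ‖x - y‖ := by
    intro s hs x y hx hy
    obtain ⟨h1, h2⟩ := hX x s (h01 s hs)
    obtain ⟨h3, h4⟩ := hX y s (h01 s hs)
    have h5 := h2.stability h4 hM hL0 hL (h01 s hs) hT hs.2 (by rwa [h1]) (by rwa [h3])
    rw [h1, h3] at h5
    have h6 := hψ.dist_le_mul (X x s T) (X y s T)
    rw [dist_eq_norm, dist_eq_norm, Real.norm_eq_abs] at h6
    calc _ ≤ _ := h6
      _ ≤ C₀ * (Real.exp L * ‖x - y‖) := by gcongr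
      _ ≤ _ := by nlinarith [norm_nonneg (x - y)]
  have hfar : ∀ s ∈ Icc (0 : ℝ) T, ∀ x y, R + 1 < ‖y‖ →
      |ψ (X x s T) - ψ (X y s T)| ≤ (C₀ * Real.exp L + B) * ‖x - y‖ := by
    intro s hs x y hy
    have hpos : 0 ≤ (C₀ : ℝ) * Real.exp L := by positivity
    rw [hzero s hs y (by linarith)]
    by_cases hx : R < ‖x‖
    · rw [hzero s hs x hx]
      simp only [sub_self, abs_zero]
      positivity
    · have h1 : 1 ≤ ‖x - y‖ := by
        have := norm_sub_norm_le y x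
        rw [norm_sub_rev] at this
        linarith
      have h2 := hB (X x s T)
      rw [Real.norm_eq_abs] at h2
      rw [sub_zero]
      nlinarith
  refine ⟨fun x s => ψ (X x s T), R, C₀ * Real.exp L + B, by positivity, by positivity, ?_, ?_,
    hzero, ?_, ?_⟩
  · intro x
    show ψ (X x T T) = ψ x
    rw [(hX x T hT).1]
  · intro x
    show ψ (X x 0 T) = ψ (Φ x T)
    have h0 : (0 : ℝ) ∈ Icc (0 : ℝ) 1 := ⟨le_rfl, zero_le_one⟩
    rw [ce_unique hM hlip (hX x 0 h0).2 (hΦ x) h0 hT hT.1 (by rw [(hX x 0 h0).1, hΦ0])]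
  · intro s hs x y
    by_cases hy : R + 1 < ‖y‖
    · exact hfar s hs x y hy
    by_cases hx : R + 1 < ‖x‖
    · rw [abs_sub_comm, norm_sub_rev]
      exact hfar s hs y x hx
    exact hCl s hs x y (not_lt.1 hx) (not_lt.1 hy)
  · intro s hs y
    obtain ⟨h1, h2⟩ := hX y s (h01 s hs)
    refine ⟨X y s, h2, h1, fun t ht => ?_⟩
    have htT : t ∈ Icc (0 : ℝ) T := ⟨ht.1, ht.2.trans hs.2⟩
    obtain ⟨h3, h4⟩ := hX (X y s t) t (h01 t htT)
    show ψ (X y s T) = ψ (X (X y s t) t T)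
    rw [ce_unique hM hlip h2 h4 (h01 t htT) hT htT.2 h3.symm]

end helpers

section helpers2
open Filter Topology Metric

variable {E : Type*} [NormedAddCommGroup E] [InnerProductSpace ℝ E] [FiniteDimensional ℝ E]
  [MeasurableSpace E] [BorelSpace E]

lemma ce_unif {F : Type*} [NormedAddCommGroup F] (w : E → ℝ → F)
    (hw : Continuous (Function.uncurry w)) (R t η : ℝ) (hη : 0 < η) :
    ∃ δ > 0, ∀ r, |r - t| < δ → ∀ y, ‖y‖ ≤ R → ‖w y r - w y t‖ ≤ η := by
  have hK : IsCompact (closedBall (0 : E) R ×ˢ Icc (t - 1) (t + 1)) :=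
    (isCompact_closedBall _ _).prod isCompact_Icc
  have hu := hK.uniformContinuousOn_of_continuous hw.continuousOn
  obtain ⟨δ, hδ, h⟩ := Metric.uniformContinuousOn_iff.1 hu η hη
  refine ⟨min δ 1, by positivity, fun r hr y hy => ?_⟩
  have hr1 := hr.trans_le (min_le_left _ _)
  have hr2 := abs_lt.1 (hr.trans_le (min_le_right _ _))
  have := h (y, r) ⟨by simpa using hy, by constructor <;> linarith⟩ (y, t)
    ⟨by simpa using hy, by constructor <;> linarith⟩ (by
      rw [Prod.dist_eq]; simp only [dist_self]
      rw [Real.dist_eq]; exact max_lt hδ hr1)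
  rw [dist_eq_norm] at this
  exact this.le

lemma ce_integrable (ν : Measure E) [IsFiniteMeasure ν] (a : E → ℝ) (ha : Continuous a) (R : ℝ)
    (h0 : ∀ y, R < ‖y‖ → a y = 0) : Integrable a ν ∧ ∃ B, ∀ y, |a y| ≤ B := by
  have hc : HasCompactSupport a :=
    HasCompactSupport.intro (isCompact_closedBall (0 : E) R) fun x hx => h0 x (by simpa using hx)
  refine ⟨ha.integrable_of_hasCompactSupport hc, ?_⟩
  obtain ⟨B, hB⟩ := hc.exists_bound_of_continuous ha
  exact ⟨B, hB⟩

lemma ce_integral_diff (ν : Measure E) [IsProbabilityMeasure ν] (a b : E → ℝ)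
    (ha : Integrable a ν) (hb : Integrable b ν) (c : ℝ) (h : ∀ y, |a y - b y| ≤ c) :
    |(∫ y, a y ∂ν) - ∫ y, b y ∂ν| ≤ c := by
  rw [← integral_sub ha hb, ← Real.norm_eq_abs]
  have := norm_integral_le_of_norm_le_const (μ := ν) (f := fun y => a y - b y) (C := c)
    (Eventually.of_forall h)
  simpa using this

lemma ce_cont (ρ : ℝ → Measure E)
    (hρprob : ∀ t ∈ Icc (0 : ℝ) 1, IsProbabilityMeasure (ρ t))
    (hnarrow : ∀ φ : E → ℝ, Continuous φ → (∃ B : ℝ, ∀ y, |φ y| ≤ B) →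
      ContinuousOn (fun t => ∫ y, φ y ∂(ρ t)) (Icc (0 : ℝ) 1))
    (a : E → ℝ → ℝ) (ha : ∀ t ∈ Icc (0 : ℝ) 1, Continuous (fun y => a y t)) (R : ℝ)
    (S : Set ℝ) (hS : S ⊆ Icc (0 : ℝ) 1)
    (h0 : ∀ t ∈ S, ∀ y, R < ‖y‖ → a y t = 0)
    (hu : ∀ t ∈ S, ∀ η > 0, ∃ δ > 0, ∀ r ∈ S, |r - t| < δ → ∀ y, |a y r - a y t| ≤ η) :
    ContinuousOn (fun t => ∫ y, a y t ∂(ρ t)) S := by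
  intro t ht
  have := hρprob t (hS ht)
  obtain ⟨hi, hb⟩ := ce_integrable (ρ t) (fun y => a y t) (ha t (hS ht)) R (h0 t ht)
  have hn := (hnarrow _ (ha t (hS ht)) hb).mono hS t ht
  rw [Metric.continuousWithinAt_iff] at hn ⊢
  intro η hη
  obtain ⟨δ₁, hδ₁, h1⟩ := hn (η / 2) (half_pos hη)
  obtain ⟨δ₂, hδ₂, h2⟩ := hu t ht (η / 2) (half_pos hη)
  refine ⟨min δ₁ δ₂, by positivity, fun {s} hs hd => ?_⟩
  have := hρprob s (hS hs)
  have hd1 := h1 hs (hd.trans_le (min_le_left _ _))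
  have hd2 := h2 s hs (by rw [← Real.dist_eq]; exact hd.trans_le (min_le_right _ _))
  have hd3 := ce_integral_diff (ρ s) (fun y => a y s) (fun y => a y t)
    (ce_integrable (ρ s) _ (ha s (hS hs)) R (h0 s hs)).1
    (ce_integrable (ρ s) _ (ha t (hS ht)) R (h0 t ht)).1 _ hd2
  rw [Real.dist_eq] at hd1 ⊢
  rw [abs_lt] at hd1 ⊢
  rw [abs_le] at hd3
  constructor <;> linarith [hd1.1, hd1.2, hd3.1, hd3.2]

/-- the second-order Taylor bound for smooth compactly supported functions -/
lemma ce_taylor (F : E → ℝ) (hF : ContDiff ℝ ((⊤ : ℕ∞) : WithTop ℕ∞) F)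
    (hc : HasCompactSupport F) :
    ∃ K, 0 ≤ K ∧ ∀ x u, |F (x + u) - F x - fderiv ℝ F x u| ≤ K * ‖u‖ ^ 2 := by
  have h1 : ContDiff ℝ 1 (fderiv ℝ F) :=
    (hF.of_le (m := 2) (WithTop.coe_le_coe.2 (le_top : (2 : ℕ∞) ≤ ⊤))).fderiv_right (by norm_num)
  obtain ⟨K, hK⟩ := h1.lipschitzWith_of_hasCompactSupport (hc.fderiv ℝ) one_ne_zero
  refine ⟨K, K.2, fun x u => ?_⟩
  have hd : Differentiable ℝ F := hF.differentiable (by simp)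
  have := (convex_segment x (x + u)).norm_image_sub_le_of_norm_hasFDerivWithin_le' (f := F)
    (f' := fderiv ℝ F) (φ := fderiv ℝ F x) (C := K * ‖u‖)
    (fun y _ => (hd y).hasFDerivAt.hasFDerivWithinAt) ?_ (left_mem_segment ℝ x (x + u))
    (right_mem_segment ℝ x (x + u))
  · simp only [add_sub_cancel_left, Real.norm_eq_abs] at this
    calc _ ≤ _ := this
      _ = _ := by ring
  · intro y hy
    have h2 := hK.dist_le_mul y x
    rw [dist_eq_norm, dist_eq_norm] at h2
    refine h2.trans ?_
    gcongr
    have := norm_sub_le_of_mem_segment hy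
    simpa using this

lemma ce_increment {v : E → ℝ → E} (hcont : Continuous (Function.uncurry v)) {M : ℝ}
    (hM : ∀ x t, ‖v x t‖ ≤ M) {T : ℝ} (hT : T ∈ Icc (0 : ℝ) 1)
    (f : E → ℝ → ℝ) (R C L ε : ℝ) (hC : 0 ≤ C) (hL0 : 0 ≤ L) (hε1 : ε ≤ 1)
    (hL : ∀ t ∈ Icc (0 : ℝ) 1, ∀ x ∈ closedBall (0 : E) (R + 2 + M),
      ∀ y ∈ closedBall (0 : E) (R + 2 + M), ‖v x t - v y t‖ ≤ L * ‖x - y‖)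
    (hf0 : ∀ s ∈ Icc (0 : ℝ) T, ∀ x, R < ‖x‖ → f x s = 0)
    (hfl : ∀ s ∈ Icc (0 : ℝ) T, ∀ x y, |f x s - f y s| ≤ C * ‖x - y‖)
    (hfc : ∀ s ∈ Icc (0 : ℝ) T, Continuous (fun x => f x s))
    (hft : ∀ s ∈ Icc (0 : ℝ) T, ∀ y, ∃ α, CESol v α ∧ α s = y ∧
        ∀ t ∈ Icc (0 : ℝ) s, f y s = f (α t) t)
    (m : (E → ℝ) → E → ℝ)
    (hm1 : ∀ f, Continuous f → ContDiff ℝ ((⊤ : ℕ∞) : WithTop ℕ∞) (m f))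
    (hm2 : ∀ f g : E → ℝ, Continuous f → Continuous g → ∀ x x' c,
        (∀ z, ‖z‖ ≤ ε → |f (x - z) - g (x' - z)| ≤ c) → |m f x - m g x'| ≤ c)
    (hm0 : ∀ s ∈ Icc (0 : ℝ) T, ∀ x, R + 1 < ‖x‖ → m (fun x => f x s) x = 0)
    (t : ℝ) (ht : t ∈ Ico (0 : ℝ) T) (η : ℝ) (hη : 0 < η) :
    ∃ δ > 0, ∀ h, 0 < h → h < δ → t + h ≤ T → ∀ x,
      |m (fun x => f x (t + h)) x - m (fun x => f x t) x
        + h * fderiv ℝ (m (fun x => f x t)) x (v x t)| ≤ h * (C * L * ε + η) := by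
  have hM0 : 0 ≤ M := (norm_nonneg _).trans (hM 0 0)
  have htT : t ∈ Icc (0 : ℝ) T := Ico_subset_Icc_self ht
  set F := m (fun x => f x t) with hFdef
  have hFc : HasCompactSupport F :=
    HasCompactSupport.intro (isCompact_closedBall (0 : E) (R + 1)) fun x hx =>
      hm0 t htT x (by simpa using hx)
  obtain ⟨K, hK0, hK⟩ := ce_taylor F (hm1 _ (hfc t htT)) hFc
  obtain ⟨δ₁, hδ₁, hω⟩ := ce_unif v hcont (R + 2 + M) t (η / (2 * (C + 1))) (by positivity)
  refine ⟨min δ₁ (η / (2 * (C * L * M + K * M ^ 2 + 1))), by positivity, ?_⟩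
  intro h h0 hδ hhT x
  have hhδ₁ := hδ.trans_le (min_le_left _ _)
  have hh2 := hδ.trans_le (min_le_right _ _)
  have hthT : t + h ∈ Icc (0 : ℝ) T := ⟨by linarith [ht.1], hhT⟩
  by_cases hx : R + 1 < ‖x‖
  · have hD : fderiv ℝ F x = 0 := by
      have : F =ᶠ[𝓝 x] fun _ => 0 := by
        filter_upwards [(isOpen_lt continuous_const continuous_norm).mem_nhds hx] with y hy
        exact hm0 t htT y hy
      rw [this.fderiv_eq]; simp
    rw [hm0 _ hthT x hx, show F x = 0 from hm0 t htT x hx, hD]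
    simp only [sub_self, ContinuousLinearMap.zero_apply, mul_zero, add_zero, abs_zero]
    by_cases hε : 0 ≤ ε
    · positivity
    · skip
      exfalso
      have h1 := hm2 (fun x => f x t) (fun x => f x t) (hfc t htT) (hfc t htT) x x (-1)
        (fun z hz => absurd (norm_nonneg z) (by linarith))
      linarith [abs_nonneg (m (fun x => f x t) x - m (fun x => f x t) x)]
  · push Not at hx
    have hT2 : |F (x + (-h) • v x t) - F x - fderiv ℝ F x ((-h) • v x t)| ≤ K * (h * M) ^ 2 := by
      refine (hK x _).trans ?_
      gcongr
      rw [norm_smul, norm_neg, Real.norm_of_nonneg h0.le]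
      gcongr
      exact hM _ _
    have hG : |m (fun x => f x (t + h)) x - F (x + (-h) • v x t)| ≤
        C * (h * (L * (ε + M * h) + η / (2 * (C + 1)))) := by
      apply hm2 _ _ (hfc _ hthT) (hfc t htT)
      intro z hz
      obtain ⟨α, hα, hαy, hα2⟩ := hft (t + h) hthT (x - z)
      show |f (x - z) (t + h) - f (x + (-h) • v x t - z) t| ≤ _
      rw [hα2 t ⟨ht.1, by linarith⟩]
      refine (hfl t htT _ _).trans ?_
      gcongr
      have hsub : ∀ r ∈ Icc t (t + h), r ∈ Icc (0 : ℝ) 1 := fun r hr =>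
        ⟨ht.1.trans hr.1, hr.2.trans (hhT.trans hT.2)⟩
      have hend : t + h ∈ Icc t (t + h) := ⟨by linarith, le_rfl⟩
      have hsta : t ∈ Icc t (t + h) := ⟨le_rfl, by linarith⟩
      have hmv := (convex_Icc t (t + h)).norm_image_sub_le_of_norm_hasDerivWithin_le
        (f := fun r => α r - r • v x t) (f' := fun r => v (α r) r - (1 : ℝ) • v x t)
        (C := L * (ε + M * h) + η / (2 * (C + 1))) ?_ ?_ hend hsta
      · have e : α t - t • v x t - (α (t + h) - (t + h) • v x t)
            = α t - (x + (-h) • v x t - z) := by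
          rw [hαy, add_smul, neg_smul]; abel
        simp only [e] at hmv
        refine hmv.trans ?_
        have : ‖t - (t + h)‖ = h := by
          rw [sub_add_cancel_left, norm_neg, Real.norm_of_nonneg h0.le]
        rw [this, mul_comm]
      · intro r hr
        exact ((hα r (hsub r hr)).mono hsub).sub ((hasDerivWithinAt_id r _).smul_const (v x t))
      · intro r hr
        rw [one_smul]
        have hxz : ‖x - z‖ ≤ R + 2 := (norm_sub_le _ _).trans (by linarith)
        have h1 : ‖α r - (x - z)‖ ≤ M * h := by
          rw [← hαy]
          refine (hα.norm_sub_le hM (hsub _ hend) (hsub r hr)).trans ?_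
          gcongr
          rw [abs_le]; constructor <;> linarith [hr.1, hr.2]
        have h2 : ‖α r‖ ≤ R + 2 + M := by
          have := hα.norm_le hM (hsub _ hend) (hsub r hr)
          rw [hαy] at this
          linarith
        have h3 : ‖α r - x‖ ≤ ε + M * h := by
          have : α r - x = (α r - (x - z)) - z := by abel
          rw [this]
          exact (norm_sub_le _ _).trans (by linarith)
        have h4 := hL r (hsub r hr) (α r) (by simpa using h2) x
          (by rw [mem_closedBall_zero_iff]; linarith)
        have h5 := hω r (by rw [abs_lt]; constructor <;> linarith [hr.1, hr.2]) x (by linarith)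
        have h6 : v (α r) r - v x t = (v (α r) r - v x r) + (v x r - v x t) := by abel
        rw [h6]
        refine (norm_add_le _ _).trans (add_le_add (h4.trans ?_) h5)
        gcongr
    rw [map_smul, smul_eq_mul] at hT2
    have hη1 : C * (η / (2 * (C + 1))) ≤ η / 2 := by
      have : C * (η / (2 * (C + 1))) = (C / (C + 1)) * (η / 2) := by
        field_simp
      rw [this]
      have : C / (C + 1) ≤ 1 := by rw [div_le_one (by positivity)]; linarith
      nlinarith
    have hη2 : (C * L * M + K * M ^ 2) * h ≤ η / 2 := by
      rw [lt_div_iff₀ (by positivity)] at hh2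
      nlinarith
    have hfin : C * (h * (L * (ε + M * h) + η / (2 * (C + 1)))) + K * (h * M) ^ 2
        ≤ h * (C * L * ε + η) := by
      have : C * (h * (L * (ε + M * h) + η / (2 * (C + 1)))) + K * (h * M) ^ 2
        = h * (C * L * ε + (C * L * M + K * M ^ 2) * h + C * (η / (2 * (C + 1)))) := by ring
      rw [this]
      exact mul_le_mul_of_nonneg_left (by linarith) h0.le
    refine le_trans ?_ hfin
    rw [abs_le] at *
    constructor <;> linarith [hG.1, hG.2, hT2.1, hT2.2]

end helpers2

section helpers3
open Filter Topology Metric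

variable {E : Type*} [NormedAddCommGroup E] [InnerProductSpace ℝ E] [FiniteDimensional ℝ E]
  [MeasurableSpace E] [BorelSpace E]

lemma ce_main_le {v : E → ℝ → E} (hcont : Continuous (Function.uncurry v)) {M : ℝ}
    (hM : ∀ x t, ‖v x t‖ ≤ M)
    (hlip : ∀ K : Set E, IsCompact K →
      ∃ L : ℝ, ∀ t ∈ Icc (0 : ℝ) 1, ∀ x ∈ K, ∀ y ∈ K, ‖v x t - v y t‖ ≤ L * ‖x - y‖)
    (Φ : E → ℝ → E) (hΦ0 : ∀ x, Φ x 0 = x) (hΦ : ∀ x, CESol v (Φ x))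
    (μ : Measure E) (ρ : ℝ → Measure E)
    (hρprob : ∀ t ∈ Icc (0 : ℝ) 1, IsProbabilityMeasure (ρ t)) (hρ0 : ρ 0 = μ)
    (hnarrow : ∀ φ : E → ℝ, Continuous φ → (∃ B : ℝ, ∀ y, |φ y| ≤ B) →
      ContinuousOn (fun t => ∫ y, φ y ∂(ρ t)) (Icc (0 : ℝ) 1))
    (hCE : ∀ φ : E → ℝ, ContDiff ℝ ((⊤ : ℕ∞) : WithTop ℕ∞) φ → HasCompactSupport φ →
      ∀ t ∈ Icc (0 : ℝ) 1, (∫ y, φ y ∂(ρ t)) - (∫ y, φ y ∂μ) =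
          ∫ r in (0 : ℝ)..t, ∫ y, fderiv ℝ φ y (v y r) ∂(ρ r))
    {T : ℝ} (hT : T ∈ Icc (0 : ℝ) 1) (ψ : E → ℝ) (hψc : HasCompactSupport ψ) {C₀ : NNReal}
    (hψ : LipschitzWith C₀ ψ) :
    (∫ y, ψ y ∂(ρ T)) ≤ ∫ x, ψ (Φ x T) ∂μ := by
  have hM0 : 0 ≤ M := (norm_nonneg _).trans (hM 0 0)
  obtain ⟨f, R, C, hR, hC, hfT, hfz, hf0, hfl, hft⟩ := ce_dual hcont hM hlip Φ hΦ0 hΦ hT ψ hψc hψ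
  obtain ⟨L, hL0, hL⟩ := ce_lip_ball hlip (R + 2 + M)
  have hfc : ∀ s ∈ Icc (0 : ℝ) T, Continuous (fun x => f x s) := by
    intro s hs
    have : LipschitzWith ⟨C, hC⟩ (fun x => f x s) := by
      apply LipschitzWith.of_dist_le_mul
      intro x y
      rw [Real.dist_eq, dist_eq_norm]
      exact hfl s hs x y
    exact this.continuous
  have h0T : (0 : ℝ) ∈ Icc (0 : ℝ) T := ⟨le_rfl, hT.1⟩
  have hTT : T ∈ Icc (0 : ℝ) T := ⟨hT.1, le_rfl⟩
  have h01 : (0 : ℝ) ∈ Icc (0 : ℝ) 1 := ⟨le_rfl, zero_le_one⟩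
  have hsub : Icc (0 : ℝ) T ⊆ Icc (0 : ℝ) 1 := Icc_subset_Icc_right hT.2
  have hpT := hρprob T hT
  have hp0 := hρprob 0 h01
  have key : ∀ ε, 0 < ε → ε ≤ 1 →
      (∫ y, ψ y ∂(ρ T)) - ∫ x, ψ (Φ x T) ∂μ ≤ (2 * C + C * L) * ε := by
    intro ε hε hε1
    obtain ⟨m, hm1, hm2, hm3⟩ := ce_mollifier E ε hε
    have hm0 : ∀ s ∈ Icc (0 : ℝ) T, ∀ x, R + 1 < ‖x‖ → m (fun x => f x s) x = 0 := by
      intro s hs x hx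
      have := hm2 (fun x => f x s) (fun _ => 0) (hfc s hs) continuous_const x x 0 (by
        intro z hz
        have h1 : R < ‖x - z‖ := by
          have := norm_sub_norm_le x z
          linarith
        simp [hf0 s hs (x - z) h1])
      rw [hm3, sub_zero] at this
      exact abs_eq_zero.1 (le_antisymm this (abs_nonneg _))
    have hmcont : ∀ s ∈ Icc (0 : ℝ) T, Continuous (m (fun x => f x s)) := fun s hs =>
      (hm1 _ (hfc s hs)).continuous
    have hmf : ∀ s ∈ Icc (0 : ℝ) T, ∀ x, |m (fun x => f x s) x - f x s| ≤ C * ε := by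
      intro s hs x
      have := hm2 (fun x => f x s) (fun _ => f x s) (hfc s hs) continuous_const x x (C * ε) (by
        intro z hz
        refine (hfl s hs _ _).trans ?_
        rw [sub_sub_cancel_left, norm_neg]
        gcongr)
      rwa [hm3] at this
    have htime' : ∀ t ∈ Icc (0 : ℝ) T, ∀ s ∈ Icc (0 : ℝ) T, t ≤ s → ∀ x,
        |m (fun x => f x s) x - m (fun x => f x t) x| ≤ C * (M * |s - t|) := by
      intro t ht s hs hts x
      apply hm2 _ _ (hfc s hs) (hfc t ht)
      intro z _
      obtain ⟨α, hα, hαy, hα2⟩ := hft s hs (x - z)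
      show |f (x - z) s - f (x - z) t| ≤ _
      rw [hα2 t ⟨ht.1, hts⟩]
      refine (hfl t ht _ _).trans ?_
      gcongr
      rw [← hαy, norm_sub_rev]
      exact hα.norm_sub_le hM (hsub ht) (hsub hs)
    have htime : ∀ t ∈ Icc (0 : ℝ) T, ∀ s ∈ Icc (0 : ℝ) T, ∀ x,
        |m (fun x => f x s) x - m (fun x => f x t) x| ≤ C * (M * |s - t|) := by
      intro t ht s hs x
      rcases le_total t s with h | h
      · exact htime' t ht s hs h x
      · rw [abs_sub_comm, abs_sub_comm s t]
        exact htime' s hs t ht h x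
    let g : ℝ → ℝ := fun t => ∫ y, m (fun x => f x t) y ∂(ρ t)
    have hgc : ContinuousOn g (Icc 0 T) := by
      have := ce_cont ρ hρprob hnarrow (fun y t => if t ∈ Icc (0 : ℝ) T then
        m (fun x => f x t) y else 0) ?_ (R + 1) (Icc 0 T) hsub ?_ ?_
      · refine this.congr fun t ht => ?_
        simp only [g, if_pos ht]
      · intro t _
        by_cases h : t ∈ Icc (0 : ℝ) T
        · simp only [if_pos h]; exact hmcont t h
        · simp only [if_neg h]; exact continuous_const
      · intro t ht y hy
        simp only [if_pos ht]; exact hm0 t ht y hy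
      · intro t ht η hη
        refine ⟨η / (C * M + 1), by positivity, fun r hr hrt y => ?_⟩
        simp only [if_pos ht, if_pos hr]
        refine (htime t ht r hr y).trans ?_
        rw [lt_div_iff₀ (by positivity)] at hrt
        nlinarith [abs_nonneg (r - t)]
    have hslope : ∀ t ∈ Ico (0 : ℝ) T, ∀ r, C * L * ε < r → ∃ᶠ z in 𝓝[>] t, slope g t z < r := by
      intro t ht r hr
      apply Eventually.frequently
      have htT : t ∈ Icc (0 : ℝ) T := Ico_subset_Icc_self ht
      have ht1 := hsub htT
      set η := (r - C * L * ε) / 4 with hηdef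
      have hη : 0 < η := by rw [hηdef]; linarith
      obtain ⟨δ₀, hδ₀, hinc⟩ := ce_increment hcont hM hT f R C L ε hC hL0 hε1 hL hf0 hfl hfc hft m
        hm1 hm2 hm0 t ht η hη
      set F := m (fun x => f x t) with hFdef
      have hFs : ContDiff ℝ ((⊤ : ℕ∞) : WithTop ℕ∞) F := hm1 _ (hfc t htT)
      have hFz : ∀ x, R + 1 < ‖x‖ → F x = 0 := hm0 t htT
      have hFc : HasCompactSupport F :=
        HasCompactSupport.intro (isCompact_closedBall (0 : E) (R + 1)) fun x hx =>
          hFz x (by simpa using hx)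
      have hDz : ∀ x, R + 1 < ‖x‖ → fderiv ℝ F x = 0 := by
        intro x hx
        have : F =ᶠ[𝓝 x] fun _ => 0 := by
          filter_upwards [(isOpen_lt continuous_const continuous_norm).mem_nhds hx] with y hy
          exact hFz y hy
        rw [this.fderiv_eq]; simp
      have hDc : Continuous (fderiv ℝ F) := hFs.continuous_fderiv (by simp)
      have hjoint : Continuous (Function.uncurry (fun y r => fderiv ℝ F y (v y r))) := by
        have : Continuous (fun p : E × ℝ => fderiv ℝ F p.1 (Function.uncurry v p)) :=
          (hDc.comp continuous_fst).clm_apply hcont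
        exact this
      have hDvc : ∀ r, Continuous (fun y => fderiv ℝ F y (v y r)) := fun r =>
        hjoint.comp (by fun_prop : Continuous (fun y : E => (y, r)))
      have hDvz : ∀ r y, R + 1 < ‖y‖ → fderiv ℝ F y (v y r) = 0 := by
        intro r y hy; rw [hDz y hy]; rfl
      set A : ℝ → ℝ := fun r => ∫ y, fderiv ℝ F y (v y r) ∂(ρ r) with hA
      have hAc : ContinuousOn A (Icc 0 1) := by
        refine ce_cont ρ hρprob hnarrow (fun y r => fderiv ℝ F y (v y r)) (fun r _ => hDvc r)
          (R + 1) (Icc 0 1) le_rfl (fun r _ => hDvz r) ?_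
        intro s _ η' hη'
        obtain ⟨δ, hδ, h⟩ := ce_unif _ hjoint (R + 1) s η' hη'
        refine ⟨δ, hδ, fun r _ hr y => ?_⟩
        by_cases hy : R + 1 < ‖y‖
        · simp only [hDvz _ y hy, sub_self, abs_zero]; exact hη'.le
        · exact h r hr y (not_lt.1 hy)
      have hA2 : ContinuousOn (fun s => ∫ y, fderiv ℝ F y (v y t) ∂(ρ s)) (Icc 0 1) :=
        hnarrow _ (hDvc t) (ce_integrable (ρ 0) _ (hDvc t) (R + 1) (hDvz t)).2
      obtain ⟨δ₁, hδ₁, hAt⟩ := Metric.continuousWithinAt_iff.1 (hAc t ht1) η hη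
      obtain ⟨δ₂, hδ₂, hAt2⟩ := Metric.continuousWithinAt_iff.1 (hA2 t ht1) η hη
      have hmem : Ioo t (min T (t + min δ₀ (min δ₁ δ₂))) ∈ 𝓝[>] t :=
        Ioo_mem_nhdsGT (lt_min ht.2 (by
          have : 0 < min δ₀ (min δ₁ δ₂) := by positivity
          linarith))
      filter_upwards [hmem] with z hz
      have hzt : t < z := hz.1
      have hzT : z < T := hz.2.trans_le (min_le_left _ _)
      have hzδ : z - t < min δ₀ (min δ₁ δ₂) := by
        have := hz.2.trans_le (min_le_right _ _)
        linarith
      have hz0 : z - t < δ₀ := hzδ.trans_le (min_le_left _ _)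
      have hz1 : z - t < δ₁ := hzδ.trans_le ((min_le_right _ _).trans (min_le_left _ _))
      have hz2 : z - t < δ₂ := hzδ.trans_le ((min_le_right _ _).trans (min_le_right _ _))
      have hzI : z ∈ Icc (0 : ℝ) T := ⟨ht.1.trans hzt.le, hzT.le⟩
      have hz1' := hsub hzI
      have hpz := hρprob z hz1'
      have hii : ∀ a ∈ Icc (0 : ℝ) 1, ∀ b ∈ Icc (0 : ℝ) 1, IntervalIntegrable A volume a b := by
        intro a ha b hb
        exact (hAc.mono (uIcc_subset_Icc ha hb)).intervalIntegrable
      have e1 : (∫ y, F y ∂(ρ z)) - (∫ y, F y ∂(ρ t)) = ∫ r in t..z, A r := by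
        have h1 := hCE F hFs hFc z hz1'
        have h2 := hCE F hFs hFc t ht1
        have h3 := intervalIntegral.integral_interval_sub_left (hii 0 h01 z hz1') (hii 0 h01 t ht1)
        rw [← h3]
        show _ = (∫ r in (0 : ℝ)..z, ∫ y, fderiv ℝ F y (v y r) ∂(ρ r))
          - (∫ r in (0 : ℝ)..t, ∫ y, fderiv ℝ F y (v y r) ∂(ρ r))
        rw [← h1, ← h2]; ring
      have e2 : ∫ r in t..z, A r ≤ (z - t) * (A t + η) := by
        have : ∫ r in t..z, A r ≤ ∫ r in t..z, (A t + η) := by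
          apply intervalIntegral.integral_mono_on hzt.le (hii t ht1 z hz1') (by simp)
          intro s hs
          have := hAt (x := s) ⟨ht.1.trans hs.1, hs.2.trans hz1'.2⟩ (by
            rw [Real.dist_eq, abs_lt]; constructor <;> linarith [hs.1, hs.2])
          rw [Real.dist_eq, abs_lt] at this
          linarith [this.2]
        rw [intervalIntegral.integral_const, smul_eq_mul] at this
        exact this
      have hGi := (ce_integrable (ρ z) _ (hmcont z hzI) (R + 1) (hm0 z hzI)).1
      have hFi := (ce_integrable (ρ z) _ (hmcont t htT) (R + 1) (hm0 t htT)).1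
      have hDi := (ce_integrable (ρ z) _ (hDvc t) (R + 1) (hDvz t)).1
      have e3 : (∫ y, m (fun x => f x z) y ∂(ρ z)) - (∫ y, F y ∂(ρ z))
          + (z - t) * (∫ y, fderiv ℝ F y (v y t) ∂(ρ z)) ≤ (z - t) * (C * L * ε + η) := by
        have hsubi : Integrable (fun y => m (fun x => f x z) y - F y) (ρ z) := hGi.sub hFi
        have hmuli : Integrable (fun y => (z - t) * fderiv ℝ F y (v y t)) (ρ z) :=
          hDi.const_mul _
        have e : (∫ y, m (fun x => f x z) y ∂(ρ z)) - (∫ y, F y ∂(ρ z))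
            + (z - t) * (∫ y, fderiv ℝ F y (v y t) ∂(ρ z))
            = ∫ y, (m (fun x => f x z) y - F y + (z - t) * fderiv ℝ F y (v y t)) ∂(ρ z) := by
          rw [integral_add hsubi hmuli, integral_sub hGi hFi, integral_const_mul]
        rw [e]
        have : ∫ y, (m (fun x => f x z) y - F y + (z - t) * fderiv ℝ F y (v y t)) ∂(ρ z)
            ≤ ∫ _y, (z - t) * (C * L * ε + η) ∂(ρ z) := by
          apply integral_mono (hsubi.add hmuli) (integrable_const _)
          intro y
          have := hinc (z - t) (by linarith) hz0 (by linarith) y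
          rw [add_sub_cancel] at this
          exact (abs_le.1 this).2
        rw [integral_const, probReal_univ, one_smul] at this
        exact this
      have e4 := hAt2 (x := z) hz1' (by rw [Real.dist_eq, abs_lt]; constructor <;> linarith)
      rw [Real.dist_eq, abs_lt] at e4
      have e4' : A t - η < ∫ y, fderiv ℝ F y (v y t) ∂(ρ z) := by
        have : A t = ∫ y, fderiv ℝ F y (v y t) ∂(ρ t) := rfl
        linarith [e4.1]
      have hpos : 0 < z - t := by linarith
      rw [slope_def_field, div_lt_iff₀ hpos]
      show (∫ y, m (fun x => f x z) y ∂(ρ z)) - (∫ y, F y ∂(ρ t)) < _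
      have e5 := mul_lt_mul_of_pos_left e4' hpos
      have e6 : r = C * L * ε + 4 * η := by rw [hηdef]; ring
      have e7 : 0 < (z - t) * η := mul_pos hpos hη
      rw [e6]
      nlinarith
    have hle : g T ≤ g 0 + C * L * ε * T := by
      have := image_le_of_liminf_slope_right_le_deriv_boundary (f := g) (a := 0) (b := T) hgc
        (B := fun t => g 0 + C * L * ε * t) (B' := fun _ => C * L * ε) (by simp)
        (by fun_prop) (fun x _ => by
          have := ((hasDerivAt_id x).const_mul (C * L * ε)).const_add (g 0)
          simpa using this.hasDerivWithinAt) hslope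
      exact this hTT
    have a1 := ce_integral_diff (ρ T) _ _
      (ce_integrable (ρ T) _ (hmcont T hTT) (R + 1) (hm0 T hTT)).1
      (ce_integrable (ρ T) _ (hfc T hTT) R (hf0 T hTT)).1 _ (hmf T hTT)
    have a2 := ce_integral_diff (ρ 0) _ _
      (ce_integrable (ρ 0) _ (hmcont 0 h0T) (R + 1) (hm0 0 h0T)).1
      (ce_integrable (ρ 0) _ (hfc 0 h0T) R (hf0 0 h0T)).1 _ (hmf 0 h0T)
    simp only [hfT, hfz] at a1 a2
    rw [← hρ0]
    have a3 : C * L * ε * T ≤ C * L * ε := by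
      have : 0 ≤ C * L * ε := by positivity
      nlinarith [hT.2]
    have a1' := (abs_le.1 a1).1
    have a2' := (abs_le.1 a2).2
    have hgT : g T = ∫ y, m ψ y ∂(ρ T) := by simp only [g, hfT]
    have hg0 : g 0 = ∫ y, m (fun x => ψ (Φ x T)) y ∂(ρ 0) := by simp only [g, hfz]
    have hη : (fun x => ψ x) = ψ := rfl
    rw [hgT, hg0] at hle
    linarith
  by_contra hlt
  push Not at hlt
  set D := (∫ y, ψ y ∂(ρ T)) - ∫ x, ψ (Φ x T) ∂μ with hD
  have hDpos : 0 < D := by linarith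
  have hK : 0 ≤ 2 * C + C * L := by positivity
  have h1 := key (min 1 (D / (2 * (2 * C + C * L + 1)))) (by positivity) (min_le_left _ _)
  have h2 : min 1 (D / (2 * (2 * C + C * L + 1))) * (2 * (2 * C + C * L + 1)) ≤ D := by
    rw [← le_div_iff₀ (by positivity)]
    exact min_le_right _ _
  have h3 : 0 < min 1 (D / (2 * (2 * C + C * L + 1))) := by positivity
  nlinarith

lemma ce_flow_continuous {v : E → ℝ → E} {M : ℝ}
    (hM : ∀ x t, ‖v x t‖ ≤ M)
    (hlip : ∀ K : Set E, IsCompact K →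
      ∃ L : ℝ, ∀ t ∈ Icc (0 : ℝ) 1, ∀ x ∈ K, ∀ y ∈ K, ‖v x t - v y t‖ ≤ L * ‖x - y‖)
    (Φ : E → ℝ → E) (hΦ0 : ∀ x, Φ x 0 = x) (hΦ : ∀ x, CESol v (Φ x))
    {T : ℝ} (hT : T ∈ Icc (0 : ℝ) 1) : Continuous (fun x => Φ x T) := by
  rw [continuous_iff_continuousAt]
  intro x
  obtain ⟨L, hL0, hL⟩ := ce_lip_ball hlip (‖x‖ + 1 + M)
  have h01 : (0 : ℝ) ∈ Icc (0 : ℝ) 1 := ⟨le_rfl, zero_le_one⟩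
  have hl : LipschitzOnWith ⟨Real.exp L, (Real.exp_pos L).le⟩ (fun x => Φ x T)
      (closedBall 0 (‖x‖ + 1)) := by
    apply LipschitzOnWith.of_dist_le_mul
    intro a ha b hb
    rw [mem_closedBall_zero_iff] at ha hb
    have := (hΦ a).stability (hΦ b) hM hL0 hL h01 hT hT.1 (by rwa [hΦ0]) (by rwa [hΦ0])
    rw [hΦ0, hΦ0] at this
    rw [dist_eq_norm, dist_eq_norm]
    exact this
  refine hl.continuousOn.continuousAt ?_
  refine mem_of_superset (ball_mem_nhds x one_pos) fun y hy => ?_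
  rw [mem_ball, dist_eq_norm] at hy
  rw [mem_closedBall_zero_iff]
  have := norm_sub_norm_le y x
  linarith

/-- two probability measures agreeing on Lipschitz compactly supported functions are equal -/
lemma ce_measure_ext (μ ν : Measure E) [IsProbabilityMeasure μ] [IsProbabilityMeasure ν]
    (h : ∀ (ψ : E → ℝ) (C : NNReal), HasCompactSupport ψ → LipschitzWith C ψ →
      ∫ y, ψ y ∂μ = ∫ y, ψ y ∂ν) : μ = ν := by
  apply Measure.ext_of_integral_eq_on_compactlySupported
  intro φ
  have hφc : HasCompactSupport φ := φ.hasCompactSupport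
  have hφ : Continuous φ := φ.continuous
  obtain ⟨R, hR⟩ := hφc.isCompact.isBounded.subset_closedBall (0 : E)
  have hφ0 : ∀ x, R < ‖x‖ → φ x = 0 := by
    intro x hx
    by_contra hne
    have := hR (subset_tsupport _ hne)
    rw [mem_closedBall_zero_iff] at this
    linarith
  rw [← sub_eq_zero, ← abs_eq_zero]
  refine le_antisymm (le_of_forall_pos_le_add fun η hη => ?_) (abs_nonneg _)
  have hu := hφc.uniformContinuous_of_continuous hφ
  obtain ⟨δ, hδ, hu⟩ := Metric.uniformContinuous_iff.1 hu (η / 2) (half_pos hη)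
  obtain ⟨m, hm1, hm2, hm3⟩ := ce_mollifier E (δ / 2) (half_pos hδ)
  have hm0 : ∀ x, R + δ < ‖x‖ → m φ x = 0 := by
    intro x hx
    have := hm2 φ (fun _ => 0) hφ continuous_const x x 0 (by
      intro z hz
      have h1 : R < ‖x - z‖ := by
        have := norm_sub_norm_le x z
        linarith
      simp [hφ0 (x - z) h1])
    rw [hm3, sub_zero] at this
    exact abs_eq_zero.1 (le_antisymm this (abs_nonneg _))
  have hmf : ∀ x, |m φ x - φ x| ≤ η / 2 := by
    intro x
    have := hm2 φ (fun _ => φ x) hφ continuous_const x x (η / 2) (by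
      intro z hz
      have := hu (a := x - z) (b := x) (by
        rw [dist_eq_norm, sub_sub_cancel_left, norm_neg]; linarith)
      rw [Real.dist_eq] at this
      exact this.le)
    rwa [hm3] at this
  have hmc : HasCompactSupport (m φ) :=
    HasCompactSupport.intro (isCompact_closedBall (0 : E) (R + δ)) fun x hx =>
      hm0 x (by simpa using hx)
  have hms := hm1 φ hφ
  obtain ⟨C, hC⟩ := hms.lipschitzWith_of_hasCompactSupport hmc (by simp)
  have heq := h (m φ) C hmc hC
  have a1 := ce_integral_diff μ _ _ (hms.continuous.integrable_of_hasCompactSupport hmc)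
    (hφ.integrable_of_hasCompactSupport hφc) _ hmf
  have a2 := ce_integral_diff ν _ _ (hms.continuous.integrable_of_hasCompactSupport hmc)
    (hφ.integrable_of_hasCompactSupport hφc) _ hmf
  rw [abs_le] at *
  constructor <;> linarith [a1.1, a1.2, a2.1, a2.2]

end helpers3

/-- uniqueness of weak solutions of the continuity equation for an admissible
velocity field: a narrowly continuous curve of probability measures starting at `μ` and
solving `∂_t ρ + ∇·(ρ v) = 0` weakly coincides with the flow-map pushforward
`ρ_t = (Φ(·,t))_#μ`, hence `∫‖v(·,t)‖² dρ_t = ∫‖v(Φ(x,t),t)‖² dμ`. -/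
theorem continuity_equation_solution_is_flow_pushforward {d : ℕ}
    (v : EuclideanSpace ℝ (Fin d) → ℝ → EuclideanSpace ℝ (Fin d))
    (hcont : Continuous (Function.uncurry v))
    (M : ℝ) (hM : ∀ x t, ‖v x t‖ ≤ M)
    (hlip : ∀ K : Set (EuclideanSpace ℝ (Fin d)), IsCompact K →
      ∃ L : ℝ, ∀ t ∈ Icc (0 : ℝ) 1, ∀ x ∈ K, ∀ y ∈ K,
        ‖v x t - v y t‖ ≤ L * ‖x - y‖)
    (Φ : EuclideanSpace ℝ (Fin d) → ℝ → EuclideanSpace ℝ (Fin d))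
    (hΦ0 : ∀ x, Φ x 0 = x)
    (hΦ : ∀ x, ∀ t ∈ Icc (0 : ℝ) 1,
      HasDerivWithinAt (Φ x) (v (Φ x t) t) (Icc (0 : ℝ) 1) t)
    (μ : Measure (EuclideanSpace ℝ (Fin d))) [IsProbabilityMeasure μ]
    (hμ2 : Integrable (fun x => ‖x‖ ^ 2) μ)
    (ρ : ℝ → Measure (EuclideanSpace ℝ (Fin d)))
    (hρprob : ∀ t ∈ Icc (0 : ℝ) 1, IsProbabilityMeasure (ρ t))
    (hρ0 : ρ 0 = μ)
    (hnarrow : ∀ φ : EuclideanSpace ℝ (Fin d) → ℝ, Continuous φ →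
      (∃ B : ℝ, ∀ y, |φ y| ≤ B) →
      ContinuousOn (fun t => ∫ y, φ y ∂(ρ t)) (Icc (0 : ℝ) 1))
    (hCE : ∀ φ : EuclideanSpace ℝ (Fin d) → ℝ, ContDiff ℝ ((⊤ : ℕ∞) : WithTop ℕ∞) φ → HasCompactSupport φ →
      ∀ t ∈ Icc (0 : ℝ) 1,
        (∫ y, φ y ∂(ρ t)) - (∫ y, φ y ∂μ) =
          ∫ r in (0 : ℝ)..t, ∫ y, ⟪gradient φ y, v y r⟫ ∂(ρ r)) :
    ∀ t ∈ Icc (0 : ℝ) 1,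
      ρ t = μ.map (fun x => Φ x t) ∧
      ∫ y, ‖v y t‖ ^ 2 ∂(ρ t) = ∫ x, ‖v (Φ x t) t‖ ^ 2 ∂μ := by
  have hΦ' : ∀ x, CESol v (Φ x) := hΦ
  have hCE' : ∀ φ : EuclideanSpace ℝ (Fin d) → ℝ, ContDiff ℝ ((⊤ : ℕ∞) : WithTop ℕ∞) φ →
      HasCompactSupport φ → ∀ t ∈ Icc (0 : ℝ) 1, (∫ y, φ y ∂(ρ t)) - (∫ y, φ y ∂μ) =
          ∫ r in (0 : ℝ)..t, ∫ y, fderiv ℝ φ y (v y r) ∂(ρ r) := by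
    intro φ h1 h2 t ht
    rw [hCE φ h1 h2 t ht]
    simp only [inner_gradient_left]
  intro t ht
  have hc := ce_flow_continuous hM hlip Φ hΦ0 hΦ' ht
  have hp := hρprob t ht
  have hp2 : IsProbabilityMeasure (μ.map (fun x => Φ x t)) :=
    Measure.isProbabilityMeasure_map hc.measurable.aemeasurable
  have hmain : ρ t = μ.map (fun x => Φ x t) := by
    apply ce_measure_ext
    intro ψ C hψc hψ
    rw [integral_map hc.measurable.aemeasurable hψ.continuous.aestronglyMeasurable]
    refine le_antisymm
      (ce_main_le hcont hM hlip Φ hΦ0 hΦ' μ ρ hρprob hρ0 hnarrow hCE' ht ψ hψc hψ) ?_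
    have := ce_main_le hcont hM hlip Φ hΦ0 hΦ' μ ρ hρprob hρ0 hnarrow hCE' ht (fun x => -ψ x)
      hψc.neg hψ.neg
    rw [integral_neg, integral_neg] at this
    linarith
  refine ⟨hmain, ?_⟩
  have hvt : Continuous (fun y => v y t) :=
    hcont.comp (by fun_prop : Continuous (fun y : EuclideanSpace ℝ (Fin d) => (y, t)))
  have hv2 : Continuous (fun y => ‖v y t‖ ^ 2) := by fun_prop
  rw [hmain, integral_map hc.measurable.aemeasurable hv2.aestronglyMeasurable]
end

section
/- Let H be a real Hilbert space, f : H → ℝ a function bounded below by m ∈ ℝ, and α > 0. Let (x_ℓ)_{ℓ ≥ 0} and (y_ℓ)_{ℓ ≥ 0} be sequences in H such that for every ℓ: (i) y_ℓ is a minimizer of z ↦ f(z) + (1/(2α))‖z − x_ℓ‖², and (ii) f(x_{ℓ+1}) ≤ f(y_ℓ). Then for every K ≥ 1, min_{0 ≤ ℓ < K} ‖y_ℓ − x_ℓ‖² ≤ 2α ( f(x₀) − m ) / K. -/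
/-- sublinear convergence of the inexact proximal scheme: if each `y_ℓ`
minimizes `z ↦ f(z) + (1/(2α))‖z − x_ℓ‖²` and `f(x_{ℓ+1}) ≤ f(y_ℓ)`, with `f ≥ m`,
then `min_{ℓ < K} ‖y_ℓ − x_ℓ‖² ≤ 2α(f(x₀) − m)/K`. -/
theorem proximal_scheme_sublinear_rate
    {H : Type*} [NormedAddCommGroup H] [InnerProductSpace ℝ H] [CompleteSpace H]
    (f : H → ℝ) (m : ℝ) (hm : ∀ x : H, m ≤ f x)
    (α : ℝ) (hα : 0 < α) (x y : ℕ → H)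
    (hmin : ∀ ℓ : ℕ, ∀ z : H,
      f (y ℓ) + 1 / (2 * α) * ‖y ℓ - x ℓ‖ ^ 2 ≤ f z + 1 / (2 * α) * ‖z - x ℓ‖ ^ 2)
    (hdec : ∀ ℓ : ℕ, f (x (ℓ + 1)) ≤ f (y ℓ))
    (K : ℕ) (hK : 1 ≤ K) :
    ∃ ℓ : ℕ, ℓ < K ∧ ‖y ℓ - x ℓ‖ ^ 2 ≤ 2 * α * (f (x 0) - m) / K := by
  have step : ∀ ℓ, ‖y ℓ - x ℓ‖ ^ 2 ≤ 2 * α * (f (x ℓ) - f (x (ℓ + 1))) := by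
    intro ℓ
    have h1 := hmin ℓ (x ℓ)
    have h2 := hdec ℓ
    simp only [sub_self, norm_zero] at h1
    have h3 : 1 / (2 * α) * ‖y ℓ - x ℓ‖ ^ 2 ≤ f (x ℓ) - f (x (ℓ + 1)) := by
      norm_num at h1 ⊢
      linarith
    have h4 := mul_le_mul_of_nonneg_left h3 (by positivity : 0 ≤ 2 * α)
    have h5 : 2 * α * (1 / (2 * α) * ‖y ℓ - x ℓ‖ ^ 2) = ‖y ℓ - x ℓ‖ ^ 2 := by
      field_simp
    linarith
  have hsum : ∀ n : ℕ, ∑ ℓ ∈ Finset.range n, ‖y ℓ - x ℓ‖ ^ 2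
      ≤ 2 * α * (f (x 0) - f (x n)) := by
    intro n
    induction n with
    | zero => simp
    | succ n ih =>
      rw [Finset.sum_range_succ]
      linarith [step n]
  have hK0 : (0 : ℝ) < K := by exact_mod_cast hK
  have hne : (Finset.range K).Nonempty := Finset.nonempty_range_iff.mpr (by omega)
  obtain ⟨ℓ, hℓ, h⟩ := Finset.exists_le_of_sum_le (s := Finset.range K)
    (f := fun ℓ => ‖y ℓ - x ℓ‖ ^ 2) (g := fun _ => 2 * α * (f (x 0) - m) / K) hne (by
      rw [Finset.sum_const, Finset.card_range, nsmul_eq_mul, mul_div_cancel₀ _ hK0.ne']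
      refine (hsum K).trans ?_
      have := hm (x K)
      gcongr)
  exact ⟨ℓ, Finset.mem_range.mp hℓ, h⟩
end

section
/- Let H be a real Hilbert space, λ > 0, and let f : H → ℝ be lower semicontinuous and λ-strongly convex, i.e. x ↦ f(x) − (λ/2)‖x‖² is convex. Let x* be a minimizer of f on H, fix α > 0 and x ∈ H, and let p be a minimizer of y ↦ f(y) + (1/(2α))‖y − x‖². Then (1 + 2λα) ‖p − x*‖² + ‖p − x‖² ≤ ‖x − x*‖². In particular ‖p − x*‖² ≤ ‖x − x*‖² / (1 + 2λα). -/
open Set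

/-- Quadratic growth of a strongly convex function at a minimizer. -/
lemma quad_growth_aux {H : Type*} [NormedAddCommGroup H] [InnerProductSpace ℝ H]
    {m : ℝ} {g : H → ℝ} (hg : StrongConvexOn univ m g) {z : H} (hz : ∀ y, g z ≤ g y) (y : H) :
    g z + m / 2 * ‖y - z‖ ^ 2 ≤ g y := by
  have key : ∀ t : ℝ, 0 < t → t < 1 → (1 - t) * (m / 2 * ‖y - z‖ ^ 2) ≤ g y - g z := by
    intro t h0 h1
    have h := hg.2 (mem_univ y) (mem_univ z) h0.le (sub_nonneg.2 h1.le) (by ring)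
    have h' := hz (t • y + (1 - t) • z)
    simp only [smul_eq_mul] at h
    have h2 : t * ((1 - t) * (m / 2 * ‖y - z‖ ^ 2)) ≤ t * (g y - g z) := by linarith
    exact le_of_mul_le_mul_left h2 h0
  by_contra! hc
  set K := m / 2 * ‖y - z‖ ^ 2 with hK
  have hn := sub_nonneg.2 (hz y)
  set d := g y - g z with hd
  have hdK : d < K := by linarith
  have hKpos : 0 < K := by linarith
  have h := key ((K - d) / (2 * K)) (div_pos (by linarith) (by linarith))
    (by rw [div_lt_one (by linarith)]; linarith)
  have e : (1 - (K - d) / (2 * K)) * K = K - (K - d) / 2 := by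
    field_simp
  rw [e] at h
  linarith

/-- Strong convexity of the proximal objective. -/
lemma prox_strong_aux {H : Type*} [NormedAddCommGroup H] [InnerProductSpace ℝ H]
    {m : ℝ} {g : H → ℝ} (hg : StrongConvexOn univ m g) (c : ℝ) (x : H) :
    StrongConvexOn univ (m + 2 * c) (fun y => g y + c * ‖y - x‖ ^ 2) := by
  refine ⟨convex_univ, fun y hy z hz a b ha hb hab => ?_⟩
  have h := hg.2 hy hz ha hb hab
  have e : ‖a • y + b • z - x‖ ^ 2
      = a * ‖y - x‖ ^ 2 + b * ‖z - x‖ ^ 2 - a * b * ‖y - z‖ ^ 2 := by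
    have e1 : a • y + b • z - x = a • (y - x) + b • (z - x) := by
      have : x = (a + b) • x := by rw [hab, one_smul]
      rw [smul_sub, smul_sub]
      nth_rewrite 1 [this]
      rw [add_smul]; abel
    have e2 : y - z = (y - x) - (z - x) := by abel
    rw [e1, e2, norm_add_sq_real, norm_sub_sq_real (y - x) (z - x), norm_smul, norm_smul, real_inner_smul_left,
      inner_smul_right, Real.norm_of_nonneg ha, Real.norm_of_nonneg hb, mul_pow, mul_pow]
    obtain rfl := eq_sub_of_add_eq hab
    ring
  simp only [smul_eq_mul] at h ⊢
  rw [e]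
  linarith

/-- one-step contraction of the proximal map of a `λ`-strongly convex lsc
function towards its minimizer:
`(1 + 2λα)‖p − x*‖² + ‖p − x‖² ≤ ‖x − x*‖²`, hence
`‖p − x*‖² ≤ ‖x − x*‖²/(1 + 2λα)`. -/
theorem proximal_step_contraction
    {H : Type*} [NormedAddCommGroup H] [InnerProductSpace ℝ H] [CompleteSpace H]
    (lam : ℝ) (hlam : 0 < lam) (f : H → ℝ)
    (hlsc : LowerSemicontinuous f)
    (hsc : ConvexOn ℝ univ (fun x => f x - lam / 2 * ‖x‖ ^ 2))
    (xs : H) (hxs : ∀ y : H, f xs ≤ f y)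
    (α : ℝ) (hα : 0 < α) (x p : H)
    (hp : ∀ y : H,
      f p + 1 / (2 * α) * ‖p - x‖ ^ 2 ≤ f y + 1 / (2 * α) * ‖y - x‖ ^ 2) :
    (1 + 2 * lam * α) * ‖p - xs‖ ^ 2 + ‖p - x‖ ^ 2 ≤ ‖x - xs‖ ^ 2 ∧
    ‖p - xs‖ ^ 2 ≤ ‖x - xs‖ ^ 2 / (1 + 2 * lam * α) := by
  have hS : StrongConvexOn univ lam f := strongConvexOn_iff_convex.2 hsc
  have h1 := quad_growth_aux hS hxs p
  have h2 := quad_growth_aux (prox_strong_aux hS (1 / (2 * α)) x) hp xs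
  simp only [norm_sub_rev xs] at h2
  have hpos : 0 < 1 + 2 * lam * α := by positivity
  have main : (1 + 2 * lam * α) * ‖p - xs‖ ^ 2 + ‖p - x‖ ^ 2 ≤ ‖x - xs‖ ^ 2 := by
    have h3 : (lam + 1 / (2 * α)) * ‖p - xs‖ ^ 2 + 1 / (2 * α) * ‖p - x‖ ^ 2
        ≤ 1 / (2 * α) * ‖x - xs‖ ^ 2 := by linarith
    have h4 := mul_le_mul_of_nonneg_left h3 (by positivity : 0 ≤ 2 * α)
    have hc : 2 * α * (1 / (2 * α)) = 1 := by field_simp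
    generalize 1 / (2 * α) = c at h4 hc
    linear_combination h4 + (‖x - xs‖ ^ 2 - ‖p - xs‖ ^ 2 - ‖p - x‖ ^ 2) * hc
  refine ⟨main, ?_⟩
  rw [le_div_iff₀ hpos]
  linarith [sq_nonneg ‖p - x‖]
end

section
/- Under the Lagrangian flow data assumptions, fix t ∈ [0,1] with ∫ ‖V(x,t)‖² dμ(x) < ∞ and let v_t be the flow-matched vector field for time t, i.e. the ρ_t-a.e. unique field with ∫‖v_t‖² dρ_t < ∞ satisfying ∫ ⟨ψ(y), v_t(y)⟩ dρ_t(y) = ∫ ⟨ψ(X_t(x)), V(x,t)⟩ dμ(x) for all ψ ∈ L²(ρ_t). Then v_t ∘ X_t is a version of the conditional expectation of the Lagrangian velocity given the position: v_t ∘ X_t = 𝔼_μ[ V(·,t) | σ(X_t) ] μ-almost everywhere, where σ(X_t) is the sub-σ-algebra of Borel sets pulled back by X_t (the σ-algebra generated by X_t). -/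
open MeasureTheory Set
open scoped RealInnerProductSpace

/-- the flow-matched vector field composed with the position map,
`v_t ∘ X_t`, is a version of the conditional expectation of the Lagrangian velocity
given the position: `v_t ∘ X_t = 𝔼_μ[V(·,t) | σ(X_t)]` μ-a.e. -/
theorem flow_matched_is_conditional_expectation {d : ℕ}
    (μ : Measure (EuclideanSpace ℝ (Fin d))) [IsProbabilityMeasure μ]
    (hμ2 : Integrable (fun x => ‖x‖ ^ 2) μ)
    (X V : EuclideanSpace ℝ (Fin d) → ℝ → EuclideanSpace ℝ (Fin d))
    (hXm : Measurable (Function.uncurry X))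
    (hVm : Measurable (Function.uncurry V))
    (hflow : ∀ᵐ x ∂μ, X x 0 = x ∧
      ∀ t ∈ Icc (0 : ℝ) 1, X x t = x + ∫ s in (0 : ℝ)..t, V x s)
    (hE : Integrable (fun x => ∫ s in (0 : ℝ)..1, ‖V x s‖ ^ 2) μ)
    (t : ℝ) (ht : t ∈ Icc (0 : ℝ) 1)
    (hVt : Integrable (fun x => ‖V x t‖ ^ 2) μ)
    (vt : EuclideanSpace ℝ (Fin d) → EuclideanSpace ℝ (Fin d))
    (hvtm : Measurable vt)
    (hvt2 : Integrable (fun y => ‖vt y‖ ^ 2) (μ.map (fun x => X x t)))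
    (hmatch : ∀ ψ : EuclideanSpace ℝ (Fin d) → EuclideanSpace ℝ (Fin d), Measurable ψ →
      Integrable (fun y => ‖ψ y‖ ^ 2) (μ.map (fun x => X x t)) →
      ∫ y, ⟪ψ y, vt y⟫ ∂(μ.map (fun x => X x t)) = ∫ x, ⟪ψ (X x t), V x t⟫ ∂μ) :
    (fun x => vt (X x t)) =ᵐ[μ]
      μ[(fun x => V x t) |
        MeasurableSpace.comap (fun x => X x t)
          (inferInstance : MeasurableSpace (EuclideanSpace ℝ (Fin d)))] := by
  have hX : Measurable (fun x => X x t) := hXm.comp (measurable_id.prodMk measurable_const)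
  have hV : Measurable (fun x => V x t) := hVm.comp (measurable_id.prodMk measurable_const)
  have hm := hX.comap_le
  have hVi : Integrable (fun x => V x t) μ :=
    ((memLp_two_iff_integrable_sq_norm hV.aestronglyMeasurable).2 hVt).integrable one_le_two
  have : IsProbabilityMeasure (μ.map (fun x => X x t)) :=
    Measure.isProbabilityMeasure_map hX.aemeasurable
  have hvi : Integrable vt (μ.map (fun x => X x t)) :=
    ((memLp_two_iff_integrable_sq_norm hvtm.aestronglyMeasurable).2 hvt2).integrable one_le_two
  have hvXi : Integrable (fun x => vt (X x t)) μ := hvi.comp_measurable hX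
  refine ae_eq_condExp_of_forall_setIntegral_eq hm hVi (fun s _ _ => hvXi.integrableOn) ?_ ?_
  · rintro s ⟨B, hB, rfl⟩ -
    have hs : MeasurableSet ((fun x => X x t) ⁻¹' B) := hX hB
    refine ext_inner_left ℝ fun c => ?_
    rw [← integral_inner hvXi.integrableOn, ← integral_inner hVi.integrableOn]
    have hψm : Measurable (B.indicator (fun _ => c)) := measurable_const.indicator hB
    have h := hmatch (B.indicator (fun _ => c)) hψm ?_
    · rw [integral_map hX.aemeasurable
        (hψm.inner hvtm).aestronglyMeasurable] at h
      rw [← integral_indicator hs, ← integral_indicator hs]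
      have key : ∀ w : EuclideanSpace ℝ (Fin d) → EuclideanSpace ℝ (Fin d), ∀ x,
          ((fun x => X x t) ⁻¹' B).indicator (fun x => ⟪c, w x⟫) x
            = ⟪B.indicator (fun _ => c) (X x t), w x⟫ := by
        intro w x
        by_cases hx : X x t ∈ B <;> simp [hx, Set.indicator]
      refine (integral_congr_ae (.of_forall (key fun x => vt (X x t)))).trans (h.trans ?_)
      exact (integral_congr_ae (.of_forall (key fun x => V x t))).symm
    · refine (memLp_two_iff_integrable_sq_norm hψm.aestronglyMeasurable).1 ?_
      exact (memLp_const c).indicator hB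
  · exact (hvtm.comp (comap_measurable _)).stronglyMeasurable.aestronglyMeasurable
end
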